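/- arXiv:0907.0873 — 4 statements merged into one kernel-verified Lean document; each statement's English description precedes it below -/
import Mathlib

section
/- Let (ρ,u) be a classical solution on [0,T) of the 2-dimensional Euler–Poisson equations without damping (β = 0, N = 2). Suppose there exists a constant ε > 0 such that 2∫_Ω (ρ|u|² + 2P) dx < gM² − ε for all t ∈ [0,T), where M = ∫_Ω ρ(t,x) dx is the (time-independent) total mass. Then T must be finite; i.e., no such solution can exist globally in time. -/
open MeasureTheory Real Filter
open scoped RealInnerProductSpace Topology

noncomputable section

/-- Euclidean space `ℝ^N`. -/
abbrev Euc (N : ℕ) := EuclideanSpace ℝ (Fin N)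

/-- Divergence of a vector field on `ℝ^N`. -/
def ediv {N : ℕ} (v : Euc N → Euc N) (x : Euc N) : ℝ :=
  ∑ i, fderiv ℝ (fun y => v y i) x (EuclideanSpace.single i 1)

/-- Partial derivative of a scalar field in the `i`-th coordinate direction. -/
def epartial {N : ℕ} (i : Fin N) (f : Euc N → ℝ) (x : Euc N) : ℝ :=
  fderiv ℝ f x (EuclideanSpace.single i 1)

/-- Green's function of the Poisson equation in `ℝ^N`:
`log |x|` for `N = 2` and `-|x|^(2-N)` for `N ≥ 3`. -/
def green (N : ℕ) (x : Euc N) : ℝ :=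
  if N = 2 then Real.log ‖x‖ else -(‖x‖ ^ ((2 : ℝ) - (N : ℝ)))

/-- Gravitational potential `Φ(t,x) = g ∫ G(x-y) ρ(t,y) dy`. -/
def potential (N : ℕ) (g : ℝ) (ρ : ℝ → Euc N → ℝ) (t : ℝ) (x : Euc N) : ℝ :=
  g * ∫ y, green N (x - y) * ρ t y

/-- A classical solution on `[0,T)` (with `T : EReal`, so `T = ⊤` means a global
solution) of the `N`-dimensional Euler–Poisson equations with pressure
`P = K ρ^γ`, damping constant `β` and gravitational constant `g`:
nonnegative `C¹` density `ρ`, `C¹` velocity `u`, with `ρ(t,·)` supported in a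
fixed bounded open set `Ω`, satisfying the continuity and momentum equations
pointwise. -/
structure IsEPSolution (N : ℕ) (K γ β g : ℝ) (Ω : Set (Euc N)) (T : EReal)
    (ρ : ℝ → Euc N → ℝ) (u : ℝ → Euc N → Euc N) : Prop where
  rho_nonneg : ∀ t x, 0 ≤ ρ t x
  rho_C1 : ContDiff ℝ 1 (fun p : ℝ × Euc N => ρ p.1 p.2)
  u_C1 : ContDiff ℝ 1 (fun p : ℝ × Euc N => u p.1 p.2)
  omega_open : IsOpen Ω
  omega_bounded : Bornology.IsBounded Ω
  support_subset : ∀ t : ℝ, 0 ≤ t → (t : EReal) < T → Function.support (ρ t) ⊆ Ω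
  continuity_eq : ∀ t : ℝ, 0 ≤ t → (t : EReal) < T → ∀ x : Euc N,
    deriv (fun s => ρ s x) t + ediv (fun y => ρ t y • u t y) x = 0
  momentum_eq : ∀ t : ℝ, 0 ≤ t → (t : EReal) < T → ∀ x : Euc N, ∀ j : Fin N,
    deriv (fun s => ρ s x * u s x j) t
      + (∑ i, epartial i (fun y => ρ t y * u t y i * u t y j) x)
      + epartial j (fun y => K * ρ t y ^ γ) x
      = -(ρ t x * epartial j (potential N g ρ t) x) - β * ρ t x * u t x j

/-- Total energy (case `γ > 1`):
`E(t) = ∫_Ω (½ ρ|u|² + P/(γ-1) + ½ ρΦ) dx` with `P = K ρ^γ`. -/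
def energy (N : ℕ) (K γ g : ℝ) (Ω : Set (Euc N)) (ρ : ℝ → Euc N → ℝ)
    (u : ℝ → Euc N → Euc N) (t : ℝ) : ℝ :=
  ∫ x in Ω, ((1 / 2) * ρ t x * ‖u t x‖ ^ 2 + K * ρ t x ^ γ / (γ - 1)
    + (1 / 2) * ρ t x * potential N g ρ t x)

/-- Isothermal total energy (case `γ = 1`, `P = Kρ`):
`E(t) = ∫_Ω (½ ρ|u|² + Kρ log ρ + ½ ρΦ) dx` (note `ρ log ρ = 0` where `ρ = 0`
since `Real.log 0 = 0`). -/
def energyIso (N : ℕ) (K g : ℝ) (Ω : Set (Euc N)) (ρ : ℝ → Euc N → ℝ)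
    (u : ℝ → Euc N → Euc N) (t : ℝ) : ℝ :=
  ∫ x in Ω, ((1 / 2) * ρ t x * ‖u t x‖ ^ 2 + K * ρ t x * Real.log (ρ t x)
    + (1 / 2) * ρ t x * potential N g ρ t x)

/-- Second inertia function `H(t) = ∫_Ω ρ(t,x)|x|² dx`. -/
def inertia (N : ℕ) (Ω : Set (Euc N)) (ρ : ℝ → Euc N → ℝ) (t : ℝ) : ℝ :=
  ∫ x in Ω, ρ t x * ‖x‖ ^ 2

/-- Maximal radius of the support of `ρ(t,·)`. -/
def maxRadius (N : ℕ) (ρ : ℝ → Euc N → ℝ) (t : ℝ) : ℝ :=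
  sSup ((fun x : Euc N => ‖x‖) '' Function.support (ρ t))

open scoped Convolution ContDiff

lemma ibp (φ h : Euc 2 → ℝ) (hφ : ContDiff ℝ 1 φ) (hh : ContDiff ℝ 1 h)
    (hc : HasCompactSupport h) (v : Euc 2) :
    ∫ x, φ x * fderiv ℝ h x v = - ∫ x, fderiv ℝ φ x v * h x := by
  have c1 : Continuous fun x => fderiv ℝ φ x v :=
    (hφ.continuous_fderiv one_ne_zero).clm_apply continuous_const
  have c2 : Continuous fun x => fderiv ℝ h x v :=
    (hh.continuous_fderiv one_ne_zero).clm_apply continuous_const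
  apply integral_mul_fderiv_eq_neg_fderiv_mul_of_integrable
  · exact (c1.mul hh.continuous).integrable_of_hasCompactSupport hc.mul_left
  · exact (hφ.continuous.mul c2).integrable_of_hasCompactSupport (hc.fderiv_apply ℝ v).mul_left
  · exact (hφ.continuous.mul hh.continuous).integrable_of_hasCompactSupport hc.mul_left
  · intro x _; exact hφ.differentiable one_ne_zero x
  · intro x _; exact hh.differentiable one_ne_zero x

lemma logNorm_locInt : LocallyIntegrable (fun z : Euc 2 => Real.log ‖z‖) volume := by
  rw [MeasureTheory.locallyIntegrable_iff]
  intro k hk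
  obtain ⟨r, hr⟩ := hk.isBounded.subset_ball (0 : Euc 2)
  refine IntegrableOn.mono_set ?_ hr
  rw [integrableOn_fun_norm_addHaar volume (f := Real.log)]
  have h2 : Module.finrank ℝ (Euc 2) - 1 = 1 := by simp
  rw [h2]
  have hc : Continuous fun y : ℝ => y ^ 1 • Real.log y := by
    simpa using Real.continuous_mul_log
  exact (hc.continuousOn.integrableOn_compact (isCompact_Icc (a := (0:ℝ)) (b := r))).mono_set
    Set.Ioo_subset_Icc_self

lemma param_deriv (f : ℝ × Euc 2 → ℝ) (hf : ContDiff ℝ 1 f) (S : Set (Euc 2)) (hS : IsCompact S)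
    (h0 : ∀ t, 0 < t → ∀ x, x ∉ S → f (t, x) = 0) (t : ℝ) (ht : 0 < t) :
    HasDerivAt (fun s => ∫ x, f (s, x)) (∫ x, deriv (fun s => f (s, x)) t) t := by
  have hd : ∀ s x, HasDerivAt (fun s => f (s, x)) (fderiv ℝ f (s, x) (1, 0)) s := by
    intro s x
    have h1 : HasFDerivAt f (fderiv ℝ f (s, x)) (s, x) :=
      (hf.differentiable one_ne_zero _).hasFDerivAt
    have h2 : HasDerivAt (fun s : ℝ => (s, x)) ((1 : ℝ), (0 : Euc 2)) s :=
      (hasDerivAt_id s).prodMk (hasDerivAt_const s x)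
    exact h1.comp_hasDerivAt s h2
  have hcont : Continuous fun p : ℝ × Euc 2 => fderiv ℝ f p (1, 0) :=
    (hf.continuous_fderiv one_ne_zero).clm_apply continuous_const
  obtain ⟨C, hC⟩ := (isCompact_Icc (a := t / 2) (b := 2 * t)).prod hS |>.exists_bound_of_continuousOn
    hcont.continuousOn
  have key := (hasDerivAt_integral_of_dominated_loc_of_deriv_le (μ := volume.restrict S)
    (F := fun s x => f (s, x)) (F' := fun s x => fderiv ℝ f (s, x) (1, 0)) (x₀ := t)
    (bound := fun _ => C) (s := Set.Icc (t / 2) (2 * t)) (Icc_mem_nhds (by linarith) (by linarith))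
    (Eventually.of_forall fun s => by
      have : Continuous fun x => f (s, x) := hf.continuous.comp (by fun_prop)
      exact this.aestronglyMeasurable)
    (by
      have : Continuous fun x => f (t, x) := hf.continuous.comp (by fun_prop)
      exact this.continuousOn.integrableOn_compact hS)
    (by
      have : Continuous fun x => fderiv ℝ f (t, x) (1, 0) := hcont.comp (by fun_prop)
      exact this.aestronglyMeasurable)
    ((ae_restrict_iff' hS.measurableSet).2 (Eventually.of_forall fun x hx s hs => hC (s, x) ⟨hs, hx⟩))
    (by
      have := hS.measure_lt_top (μ := volume)
      exact integrableOn_const this.ne)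
    (Eventually.of_forall fun x s _ => hd s x)).2
  have e1 : ∫ x, deriv (fun s => f (s, x)) t = ∫ x in S, fderiv ℝ f (t, x) (1, 0) := by
    rw [← setIntegral_eq_integral_of_forall_compl_eq_zero (s := S)]
    · simp only [(hd t _).deriv]
    · intro x hx
      have : (fun s => f (s, x)) =ᶠ[𝓝 t] fun _ => 0 := by
        filter_upwards [lt_mem_nhds ht] with s hs using h0 s hs x hx
      rw [this.deriv_eq]; simp
  rw [e1]
  refine key.congr_of_eventuallyEq ?_
  filter_upwards [lt_mem_nhds ht] with s hs
  exact (setIntegral_eq_integral_of_forall_compl_eq_zero fun x hx => h0 s hs x hx).symm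

lemma pot_rewrite (r : Euc 2 → ℝ) (x : Euc 2) :
    ∫ y, Real.log ‖x - y‖ * r y
      = ((fun z : Euc 2 => Real.log ‖z‖) ⋆[ContinuousLinearMap.mul ℝ ℝ, volume] r) x := by
  rw [convolution_def]
  rw [← integral_sub_left_eq_self (fun z => (ContinuousLinearMap.mul ℝ ℝ) (Real.log ‖z‖) (r (x - z)))
    volume x]
  simp

def wconv (r : Euc 2 → ℝ) (v x : Euc 2) : ℝ :=
  ((fun z : Euc 2 => Real.log ‖z‖) ⋆[ContinuousLinearMap.mul ℝ ℝ, volume]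
    (fun a => fderiv ℝ r a v)) x

lemma pot_fderiv (r : Euc 2 → ℝ) (hr : ContDiff ℝ 1 r) (hc : HasCompactSupport r) (x v : Euc 2) :
    fderiv ℝ (fun x => ∫ y, Real.log ‖x - y‖ * r y) x v = wconv r v x := by
  have : (fun x => ∫ y, Real.log ‖x - y‖ * r y)
      = ((fun z : Euc 2 => Real.log ‖z‖) ⋆[ContinuousLinearMap.mul ℝ ℝ, volume] r) :=
    funext fun x => pot_rewrite r x
  rw [this, (hc.hasFDerivAt_convolution_right (ContinuousLinearMap.mul ℝ ℝ) logNorm_locInt hr x).fderiv]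
  rw [convolution_precompR_apply (ContinuousLinearMap.mul ℝ ℝ) logNorm_locInt (hc.fderiv ℝ)
    (hr.continuous_fderiv one_ne_zero)]
  rfl

lemma pot_diff (r : Euc 2 → ℝ) (hr : ContDiff ℝ 1 r) (hc : HasCompactSupport r) (x : Euc 2) :
    DifferentiableAt ℝ (fun x => ∫ y, Real.log ‖x - y‖ * r y) x := by
  have : (fun x => ∫ y, Real.log ‖x - y‖ * r y)
      = ((fun z : Euc 2 => Real.log ‖z‖) ⋆[ContinuousLinearMap.mul ℝ ℝ, volume] r) :=
    funext fun x => pot_rewrite r x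
  rw [this]
  exact (hc.hasFDerivAt_convolution_right (ContinuousLinearMap.mul ℝ ℝ)
    logNorm_locInt hr x).differentiableAt

lemma conv_cont (f r : Euc 2 → ℝ) (hf : LocallyIntegrable f volume) (hr : Continuous r)
    (hc : HasCompactSupport r) : Continuous (fun x => ∫ z, f z * r (x - z)) :=
  hc.continuous_convolution_right (ContinuousLinearMap.mul ℝ ℝ) hf hr

lemma conv_int (f r : Euc 2 → ℝ) (hf : LocallyIntegrable f volume) (hr : Continuous r)
    (hc : HasCompactSupport r) (x : Euc 2) : Integrable (fun z => f z * r (x - z)) :=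
  hc.convolutionExists_right (ContinuousLinearMap.mul ℝ ℝ) hf hr x

lemma wconv_cont (r : Euc 2 → ℝ) (hr : ContDiff ℝ 1 r) (hc : HasCompactSupport r) (v : Euc 2) :
    Continuous (wconv r v) :=
  conv_cont _ _ logNorm_locInt ((hr.continuous_fderiv one_ne_zero).clm_apply continuous_const)
    (hc.fderiv_apply ℝ v)

/-- regularized logarithm -/
def Lreg (δ : ℝ) (z : Euc 2) : ℝ := (1 / 2) * Real.log (‖z‖ ^ 2 + δ)

lemma Lreg_bound (δ : ℝ) (h0 : 0 < δ) (h1 : δ ≤ 1) (z : Euc 2) (hz : z ≠ 0) :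
    |Lreg δ z| ≤ |Real.log ‖z‖| + ‖z‖ ^ 2 := by
  have hn : 0 < ‖z‖ := norm_pos_iff.2 hz
  have a1 : Real.log (‖z‖ ^ 2) ≤ Real.log (‖z‖ ^ 2 + δ) :=
    Real.log_le_log (by positivity) (by linarith)
  have a2 : Real.log (‖z‖ ^ 2 + δ) ≤ ‖z‖ ^ 2 + δ - 1 := Real.log_le_sub_one_of_pos (by positivity)
  rw [Real.log_pow] at a1
  push_cast at a1
  unfold Lreg
  have a3 := neg_abs_le (Real.log ‖z‖)
  have a4 := abs_nonneg (Real.log ‖z‖)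
  rw [abs_le]
  constructor <;> nlinarith [sq_nonneg ‖z‖]

lemma Lreg_contDiff (δ : ℝ) (h0 : 0 < δ) : ContDiff ℝ 1 (Lreg δ) := by
  unfold Lreg
  refine contDiff_const.mul (ContDiff.log ((contDiff_norm_sq ℝ).add contDiff_const) ?_)
  intro x; positivity

lemma Lreg_tendsto (z : Euc 2) (hz : z ≠ 0) :
    Tendsto (fun n : ℕ => Lreg (1 / ((n : ℝ) + 1)) z) atTop (𝓝 (Real.log ‖z‖)) := by
  have hn : 0 < ‖z‖ := norm_pos_iff.2 hz
  have h1 : Tendsto (fun n : ℕ => ‖z‖ ^ 2 + 1 / ((n : ℝ) + 1)) atTop (𝓝 (‖z‖ ^ 2 + 0)) :=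
    tendsto_const_nhds.add tendsto_one_div_add_atTop_nhds_zero_nat
  have h2 := (h1.log (by positivity)).const_mul (1 / 2)
  have e : (1 / 2) * Real.log (‖z‖ ^ 2 + 0) = Real.log ‖z‖ := by
    rw [add_zero, Real.log_pow]; push_cast; ring
  rw [e] at h2
  exact h2

lemma ae_ne_zero : ∀ᵐ z : Euc 2, z ≠ 0 := by
  have : volume ({0} : Set (Euc 2)) = 0 := measure_singleton 0
  rw [ae_iff]; simpa using this

lemma bnd_locInt : LocallyIntegrable (fun z : Euc 2 => |Real.log ‖z‖| + ‖z‖ ^ 2) volume := by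
  refine LocallyIntegrable.add ?_ ?_
  · exact fun x => (logNorm_locInt x).norm
  · have : Continuous fun z : Euc 2 => ‖z‖ ^ 2 := by fun_prop
    exact this.locallyIntegrable

lemma delta_mem (n : ℕ) : 0 < 1 / ((n : ℝ) + 1) ∧ 1 / ((n : ℝ) + 1) ≤ 1 := by
  have : (0:ℝ) ≤ n := n.cast_nonneg
  refine ⟨by positivity, ?_⟩
  rw [div_le_one (by positivity)]; linarith

lemma dct_in (q : Euc 2 → ℝ) (hq : Continuous q) (hc : HasCompactSupport q) (x : Euc 2) :
    Tendsto (fun n : ℕ => ∫ z, Lreg (1 / ((n : ℝ) + 1)) z * q (x - z)) atTop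
      (𝓝 (∫ z, Real.log ‖z‖ * q (x - z))) := by
  refine tendsto_integral_of_dominated_convergence
    (fun z => (|Real.log ‖z‖| + ‖z‖ ^ 2) * ‖q (x - z)‖) ?_ ?_ ?_ ?_
  · intro n
    have : Continuous fun z => Lreg (1 / ((n : ℝ) + 1)) z * q (x - z) :=
      (Lreg_contDiff _ (delta_mem n).1).continuous.mul (hq.comp (by fun_prop))
    exact this.aestronglyMeasurable
  · exact conv_int _ (fun y => ‖q y‖) bnd_locInt hq.norm hc.norm x
  · intro n
    filter_upwards [ae_ne_zero] with z hz
    rw [norm_mul]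
    exact mul_le_mul_of_nonneg_right (Lreg_bound _ (delta_mem n).1 (delta_mem n).2 z hz) (norm_nonneg _)
  · filter_upwards [ae_ne_zero] with z hz
    exact (Lreg_tendsto z hz).mul_const _

lemma dct_out (q h : Euc 2 → ℝ) (hq : Continuous q) (hc : HasCompactSupport q)
    (hh : Continuous h) (hhc : HasCompactSupport h) :
    Tendsto (fun n : ℕ => ∫ x, h x * ∫ z, Lreg (1 / ((n : ℝ) + 1)) z * q (x - z)) atTop
      (𝓝 (∫ x, h x * ∫ z, Real.log ‖z‖ * q (x - z))) := by
  refine tendsto_integral_of_dominated_convergence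
    (fun x => ‖h x‖ * ∫ z, (|Real.log ‖z‖| + ‖z‖ ^ 2) * ‖q (x - z)‖) ?_ ?_ ?_ ?_
  · intro n
    have : Continuous fun x => h x * ∫ z, Lreg (1 / ((n : ℝ) + 1)) z * q (x - z) :=
      hh.mul (conv_cont _ _ (Lreg_contDiff _ (delta_mem n).1).continuous.locallyIntegrable hq hc)
    exact this.aestronglyMeasurable
  · have : Continuous fun x => ‖h x‖ * ∫ z, (|Real.log ‖z‖| + ‖z‖ ^ 2) * ‖q (x - z)‖ :=
      hh.norm.mul (conv_cont _ (fun y => ‖q y‖) bnd_locInt hq.norm hc.norm)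
    exact this.integrable_of_hasCompactSupport hhc.norm.mul_right
  · intro n
    refine Eventually.of_forall fun x => ?_
    rw [norm_mul]
    refine mul_le_mul_of_nonneg_left ?_ (norm_nonneg _)
    refine norm_integral_le_of_norm_le (conv_int _ (fun y => ‖q y‖) bnd_locInt hq.norm hc.norm x) ?_
    filter_upwards [ae_ne_zero] with z hz
    rw [norm_mul]
    exact mul_le_mul_of_nonneg_right (Lreg_bound _ (delta_mem n).1 (delta_mem n).2 z hz) (norm_nonneg _)
  · exact Eventually.of_forall fun x => (dct_in q hq hc x).const_mul _

lemma Lreg_fderiv (δ : ℝ) (h0 : 0 < δ) (x y : Euc 2) (j : Fin 2) :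
    fderiv ℝ (fun y => Lreg δ (x - y)) y (EuclideanSpace.single j 1)
      = - ((x j - y j) / (‖x - y‖ ^ 2 + δ)) := by
  have hp : ‖x - y‖ ^ 2 + δ ≠ 0 := by positivity
  have h1 : HasFDerivAt (fun y : Euc 2 => x - y) (-(ContinuousLinearMap.id ℝ (Euc 2))) y := by
    simpa using (hasFDerivAt_id y).const_sub x
  have h2 := ((h1.norm_sq.add_const δ).log hp).const_mul (1 / 2)
  have h3 : HasFDerivAt (fun y => Lreg δ (x - y)) _ y := h2
  rw [h3.fderiv]
  simp [EuclideanSpace.inner_single_right]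
  field_simp
  try ring

lemma wreg_eq (r : Euc 2 → ℝ) (hr : ContDiff ℝ 1 r) (hc : HasCompactSupport r) (δ : ℝ) (h0 : 0 < δ)
    (x : Euc 2) (j : Fin 2) :
    ∫ z, Lreg δ z * fderiv ℝ r (x - z) (EuclideanSpace.single j 1)
      = ∫ y, ((x j - y j) / (‖x - y‖ ^ 2 + δ)) * r y := by
  rw [← integral_sub_left_eq_self
    (fun z => Lreg δ z * fderiv ℝ r (x - z) (EuclideanSpace.single j 1)) volume x]
  simp only [sub_sub_cancel]
  rw [ibp (fun y => Lreg δ (x - y)) r ((Lreg_contDiff δ h0).comp (by fun_prop)) hr hc]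
  simp only [Lreg_fderiv δ h0]
  rw [← integral_neg]
  congr 1; ext y; ring

section dbl
variable (r : Euc 2 → ℝ) (hr : Continuous r) (hc : HasCompactSupport r)

lemma dbl_int (r : Euc 2 → ℝ) (hr : Continuous r) (hc : HasCompactSupport r)
    (k : Euc 2 × Euc 2 → ℝ) (hk : Continuous k) :
    Integrable (fun p : Euc 2 × Euc 2 => r p.1 * r p.2 * k p) (volume.prod volume) := by
  have hcont : Continuous (fun p : Euc 2 × Euc 2 => r p.1 * r p.2 * k p) := by fun_prop
  refine hcont.integrable_of_hasCompactSupport ?_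
  refine HasCompactSupport.intro (IsCompact.prod hc hc) ?_
  rintro ⟨x, y⟩ hxy
  rw [Set.mem_prod, not_and_or] at hxy
  rcases hxy with h | h
  · simp [image_eq_zero_of_notMem_tsupport h]
  · simp [image_eq_zero_of_notMem_tsupport h]

lemma dbl_iter (r : Euc 2 → ℝ) (hr : Continuous r) (hc : HasCompactSupport r)
    (k : Euc 2 × Euc 2 → ℝ) (hk : Continuous k) :
    ∫ p : Euc 2 × Euc 2, r p.1 * r p.2 * k p ∂(volume.prod volume)
      = ∫ x, r x * ∫ y, k (x, y) * r y := by
  rw [integral_prod _ (dbl_int r hr hc k hk)]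
  congr 1; ext x
  rw [← integral_const_mul]
  congr 1; ext y; ring

lemma dbl_swap (r : Euc 2 → ℝ) (k : Euc 2 × Euc 2 → ℝ) :
    ∫ p : Euc 2 × Euc 2, r p.1 * r p.2 * k p.swap ∂(volume.prod volume)
      = ∫ p : Euc 2 × Euc 2, r p.1 * r p.2 * k p ∂(volume.prod volume) := by
  rw [← integral_prod_swap]
  congr 1; ext p; simp; left; ring

lemma dbl_lim (r : Euc 2 → ℝ) (hr : Continuous r) (hc : HasCompactSupport r) :
    Tendsto (fun n : ℕ => ∫ p : Euc 2 × Euc 2, r p.1 * r p.2 *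
      (‖p.1 - p.2‖ ^ 2 / (‖p.1 - p.2‖ ^ 2 + 1 / ((n : ℝ) + 1))) ∂(volume.prod volume)) atTop
      (𝓝 ((∫ x, r x) ^ 2)) := by
  have e : (∫ x, r x) ^ 2 = ∫ p : Euc 2 × Euc 2, r p.1 * r p.2 * 1 ∂(volume.prod volume) := by
    simp only [mul_one]
    rw [integral_prod_mul, sq]
  rw [e]
  have hdiag : ∀ᵐ p : Euc 2 × Euc 2 ∂(volume.prod volume), p.1 ≠ p.2 := by
    rw [ae_iff]
    have hm : MeasurableSet {p : Euc 2 × Euc 2 | ¬ p.1 ≠ p.2} := by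
      simp only [ne_eq, not_not]
      exact (isClosed_eq continuous_fst continuous_snd).measurableSet
    rw [Measure.measure_prod_null hm]
    refine Eventually.of_forall fun x => ?_
    have : Prod.mk x ⁻¹' {p : Euc 2 × Euc 2 | ¬ p.1 ≠ p.2} = {x} := by
      ext y; simp [eq_comm]
    simp only [this]
    exact measure_singleton x
  refine tendsto_integral_of_dominated_convergence
    (fun p => ‖r p.1 * r p.2 * 1‖) ?_ ?_ ?_ ?_
  · intro n
    have hd := (delta_mem n).1
    have : Continuous (fun p : Euc 2 × Euc 2 => r p.1 * r p.2 *
      (‖p.1 - p.2‖ ^ 2 / (‖p.1 - p.2‖ ^ 2 + 1 / ((n : ℝ) + 1)))) := by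
      refine Continuous.mul (by fun_prop) (Continuous.div (by fun_prop) (by fun_prop) ?_)
      intro p; positivity
    exact this.aestronglyMeasurable
  · exact (dbl_int r hr hc (fun _ => 1) continuous_const).norm
  · intro n
    refine Eventually.of_forall fun p => ?_
    have hd := (delta_mem n).1
    rw [norm_mul, norm_mul _ (1:ℝ)]
    refine mul_le_mul_of_nonneg_left ?_ (norm_nonneg _)
    rw [Real.norm_of_nonneg (by positivity), norm_one, div_le_one (by positivity)]
    linarith
  · filter_upwards [hdiag] with p hp
    have hn : 0 < ‖p.1 - p.2‖ := norm_pos_iff.2 (sub_ne_zero.2 hp)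
    refine Tendsto.const_mul _ ?_
    have h1 : Tendsto (fun n : ℕ => ‖p.1 - p.2‖ ^ 2 + 1 / ((n : ℝ) + 1)) atTop
        (𝓝 (‖p.1 - p.2‖ ^ 2 + 0)) :=
      tendsto_const_nhds.add tendsto_one_div_add_atTop_nhds_zero_nat
    have h2 := (tendsto_const_nhds (x := ‖p.1 - p.2‖ ^ 2)).div h1 (by positivity)
    rw [add_zero, div_self (by positivity)] at h2
    exact h2

end dbl

lemma virial (r : Euc 2 → ℝ) (hr : ContDiff ℝ 1 r) (hc : HasCompactSupport r) :
    ∑ j : Fin 2, ∫ x : Euc 2, r x * x j * wconv r (EuclideanSpace.single j 1) x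
      = (∫ x, r x) ^ 2 / 2 := by
  have hrc := hr.continuous
  have lim1 : Tendsto (fun n : ℕ => ∑ j : Fin 2, ∫ x : Euc 2, (r x * x j) *
      ∫ z, Lreg (1 / ((n : ℝ) + 1)) z * fderiv ℝ r (x - z) (EuclideanSpace.single j 1)) atTop
      (𝓝 (∑ j : Fin 2, ∫ x : Euc 2, r x * x j * wconv r (EuclideanSpace.single j 1) x)) := by
    refine tendsto_finsetSum _ fun j _ => ?_
    exact dct_out (fun y => fderiv ℝ r y (EuclideanSpace.single j 1)) (fun x => r x * x j)
      ((hr.continuous_fderiv one_ne_zero).clm_apply continuous_const) (hc.fderiv_apply ℝ _)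
      (by fun_prop) hc.mul_right
  have lim2 := (dbl_lim r hrc hc).div_const 2
  refine tendsto_nhds_unique lim1 (lim2.congr fun n => ?_)
  set δ : ℝ := 1 / ((n : ℝ) + 1) with hδ
  have hd : 0 < δ := (delta_mem n).1
  simp only [wreg_eq r hr hc δ hd]
  have hk : ∀ j : Fin 2, Continuous fun p : Euc 2 × Euc 2 =>
      p.1 j * ((p.1 j - p.2 j) / (‖p.1 - p.2‖ ^ 2 + δ)) := by
    intro j
    refine Continuous.mul (by fun_prop) (Continuous.div (by fun_prop) (by fun_prop) ?_)
    intro p; positivity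
  have step : ∀ j : Fin 2, ∫ x : Euc 2, r x * x j * ∫ y, (x j - y j) / (‖x - y‖ ^ 2 + δ) * r y
      = ∫ p : Euc 2 × Euc 2, r p.1 * r p.2 *
        (p.1 j * ((p.1 j - p.2 j) / (‖p.1 - p.2‖ ^ 2 + δ))) ∂(volume.prod volume) := by
    intro j
    rw [dbl_iter r hrc hc _ (hk j)]
    congr 1; ext x
    rw [mul_assoc, ← integral_const_mul]
    congr 2; ext y; ring
  simp only [step]
  have hK : Continuous fun p : Euc 2 × Euc 2 => ∑ j : Fin 2,
      p.1 j * ((p.1 j - p.2 j) / (‖p.1 - p.2‖ ^ 2 + δ)) := continuous_finsetSum _ fun j _ => hk j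
  rw [← integral_finsetSum _ (fun j _ => dbl_int r hrc hc _ (hk j))]
  simp only [← Finset.mul_sum]
  have hsw := dbl_swap r (fun p => ∑ j : Fin 2,
      p.1 j * ((p.1 j - p.2 j) / (‖p.1 - p.2‖ ^ 2 + δ)))
  have hadd := integral_add (dbl_int r hrc hc _ (hK.comp continuous_swap)) (dbl_int r hrc hc _ hK)
  have hQ : ∫ p : Euc 2 × Euc 2, r p.1 * r p.2 *
      (‖p.1 - p.2‖ ^ 2 / (‖p.1 - p.2‖ ^ 2 + δ)) ∂(volume.prod volume)
      = ∫ p : Euc 2 × Euc 2, (r p.1 * r p.2 * ((fun p : Euc 2 × Euc 2 => ∑ j : Fin 2,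
      p.1 j * ((p.1 j - p.2 j) / (‖p.1 - p.2‖ ^ 2 + δ))) ∘ Prod.swap) p + r p.1 * r p.2 * ∑ j : Fin 2,
      p.1 j * ((p.1 j - p.2 j) / (‖p.1 - p.2‖ ^ 2 + δ))) ∂(volume.prod volume) := by
    congr 1; ext p
    simp only [Function.comp, Prod.fst_swap, Prod.snd_swap, norm_sub_rev p.2 p.1, Fin.sum_univ_two]
    have hp : ‖p.1 - p.2‖ ^ 2 + δ ≠ 0 := by positivity
    rw [← mul_add]
    congr 1
    have hn : ‖p.1 - p.2‖ ^ 2 = (p.1 0 - p.2 0) ^ 2 + (p.1 1 - p.2 1) ^ 2 := by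
      rw [EuclideanSpace.real_norm_sq_eq]; simp
    field_simp
    rw [hn]; ring
  rw [hQ, hadd]
  simp only [Function.comp] at hsw ⊢
  rw [hsw]; ring

lemma fderiv_coord (x : Euc 2) (i j : Fin 2) :
    fderiv ℝ (fun y : Euc 2 => y j) x (EuclideanSpace.single i 1) = if i = j then 1 else 0 := by
  have h : HasFDerivAt (fun y : Euc 2 => y j) (EuclideanSpace.proj j : Euc 2 →L[ℝ] ℝ) x :=
    (EuclideanSpace.proj j : Euc 2 →L[ℝ] ℝ).hasFDerivAt
  rw [h.fderiv]
  simp [eq_comm]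

lemma fderiv_nsq (x : Euc 2) (i : Fin 2) :
    fderiv ℝ (fun y : Euc 2 => ‖y‖ ^ 2) x (EuclideanSpace.single i 1) = 2 * x i := by
  have h := (hasFDerivAt_id x).norm_sq
  have h' : HasFDerivAt (fun y : Euc 2 => ‖y‖ ^ 2) _ x := h
  rw [h'.fderiv]
  simp [EuclideanSpace.inner_single_right]

/-- the momentum-type moment -/
def Fm (ρ : ℝ → Euc 2 → ℝ) (u : ℝ → Euc 2 → Euc 2) (t : ℝ) : ℝ :=
  ∑ j : Fin 2, ∫ x : Euc 2, x j * (ρ t x * u t x j)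

section main
variable {K γ g : ℝ} {Ω : Set (Euc 2)} {ρ : ℝ → Euc 2 → ℝ} {u : ℝ → Euc 2 → Euc 2}

lemma sol_cs (hsol : IsEPSolution 2 K γ 0 g Ω ⊤ ρ u) (t : ℝ) (ht : 0 ≤ t) :
    HasCompactSupport (ρ t) := by
  have hS : IsCompact (closure Ω) := hsol.omega_bounded.isCompact_closure
  refine HasCompactSupport.intro hS fun x hx => ?_
  by_contra h
  exact hx (subset_closure (hsol.support_subset t ht (EReal.coe_lt_top t) h))

lemma sol_zero (hsol : IsEPSolution 2 K γ 0 g Ω ⊤ ρ u) (t : ℝ) (ht : 0 ≤ t) (x : Euc 2)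
    (hx : x ∉ Ω) : ρ t x = 0 := by
  by_contra h
  exact hx (hsol.support_subset t ht (EReal.coe_lt_top t) h)

lemma sol_rho (hsol : IsEPSolution 2 K γ 0 g Ω ⊤ ρ u) (t : ℝ) : ContDiff ℝ 1 (ρ t) :=
  hsol.rho_C1.comp (contDiff_prodMk_right t)

lemma sol_u (hsol : IsEPSolution 2 K γ 0 g Ω ⊤ ρ u) (t : ℝ) (i : Fin 2) :
    ContDiff ℝ 1 (fun x => u t x i) :=
  (contDiff_euclidean.1 hsol.u_C1 i).comp (contDiff_prodMk_right t)

lemma deriv_H (hsol : IsEPSolution 2 K γ 0 g Ω ⊤ ρ u) (t : ℝ) (ht : 0 < t) :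
    HasDerivAt (fun s => ∫ x, ρ s x * ‖x‖ ^ 2) (2 * Fm ρ u t) t := by
  have hS : IsCompact (closure Ω) := hsol.omega_bounded.isCompact_closure
  have h := param_deriv (fun p => ρ p.1 p.2 * ‖p.2‖ ^ 2)
    (hsol.rho_C1.mul ((contDiff_norm_sq ℝ).comp contDiff_snd)) (closure Ω) hS
    (fun s hs x hx => by
      simp [sol_zero hsol s hs.le x (fun h => hx (subset_closure h))]) t ht
  refine h.congr_deriv ?_
  simp only
  have hC1 : ∀ i : Fin 2, ContDiff ℝ 1 (fun y => ρ t y * u t y i) := fun i =>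
    (sol_rho hsol t).mul (sol_u hsol t i)
  have hcs : ∀ i : Fin 2, HasCompactSupport (fun y => ρ t y * u t y i) := fun i =>
    (sol_cs hsol t ht.le).mul_right
  have hpt : ∀ x, deriv (fun s => ρ s x * ‖x‖ ^ 2) t
      = - ∑ i : Fin 2, ‖x‖ ^ 2 * fderiv ℝ (fun y => ρ t y * u t y i) x (EuclideanSpace.single i 1) := by
    intro x
    have hd : DifferentiableAt ℝ (fun s => ρ s x) t :=
      (hsol.rho_C1.comp (contDiff_prodMk_left x)).differentiable one_ne_zero t
    rw [deriv_mul_const hd]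
    have := hsol.continuity_eq t ht.le (EReal.coe_lt_top t) x
    unfold ediv at this
    simp only [PiLp.smul_apply, smul_eq_mul] at this
    rw [eq_neg_of_add_eq_zero_left this, ← Finset.mul_sum]
    ring
  simp only [hpt]
  have hint : ∀ i : Fin 2, Integrable fun x : Euc 2 =>
      ‖x‖ ^ 2 * fderiv ℝ (fun y => ρ t y * u t y i) x (EuclideanSpace.single i 1) := fun i => by
    have c2 : Continuous fun x => fderiv ℝ (fun y => ρ t y * u t y i) x (EuclideanSpace.single i 1) :=
      ((hC1 i).continuous_fderiv one_ne_zero).clm_apply continuous_const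
    have c3 : Continuous fun x : Euc 2 => ‖x‖ ^ 2 := by fun_prop
    exact (c3.mul c2).integrable_of_hasCompactSupport ((hcs i).fderiv_apply ℝ _).mul_left
  rw [integral_neg, integral_finsetSum _ (fun i _ => hint i), Fm, Finset.mul_sum,
    ← Finset.sum_neg_distrib]
  refine Finset.sum_congr rfl fun i _ => ?_
  rw [ibp _ _ (contDiff_norm_sq ℝ) (hC1 i) (hcs i), neg_neg, ← integral_const_mul]
  congr 1; ext x
  rw [fderiv_nsq]; ring

lemma deriv_F (hγ : 1 ≤ γ) (hsol : IsEPSolution 2 K γ 0 g Ω ⊤ ρ u) (t : ℝ) (ht : 0 < t) :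
    HasDerivAt (Fm ρ u) ((∫ x, (ρ t x * ‖u t x‖ ^ 2 + 2 * (K * ρ t x ^ γ)))
      - g * (∫ x, ρ t x) ^ 2 / 2) t := by
  have hS : IsCompact (closure Ω) := hsol.omega_bounded.isCompact_closure
  have hr := sol_rho hsol t
  have hcr := sol_cs hsol t ht.le
  have h : ∀ j : Fin 2, HasDerivAt (fun s => ∫ x : Euc 2, x j * (ρ s x * u s x j))
      (∫ x : Euc 2, deriv (fun s => x j * (ρ s x * u s x j)) t) t := fun j =>
    param_deriv (fun p => p.2 j * (ρ p.1 p.2 * u p.1 p.2 j))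
      ((contDiff_euclidean.1 contDiff_snd j).mul
        (hsol.rho_C1.mul (contDiff_euclidean.1 hsol.u_C1 j))) (closure Ω) hS
      (fun s hs x hx => by
        simp [sol_zero hsol s hs.le x (fun h => hx (subset_closure h))]) t ht
  have hsum := HasDerivAt.fun_sum (u := Finset.univ) fun j _ => h j
  refine HasDerivAt.congr_deriv (f := Fm ρ u) hsum ?_
  have hA1 : ∀ i j : Fin 2, ContDiff ℝ 1 (fun y => ρ t y * u t y i * u t y j) := fun i j =>
    (hr.mul (sol_u hsol t i)).mul (sol_u hsol t j)
  have hAc : ∀ i j : Fin 2, HasCompactSupport (fun y => ρ t y * u t y i * u t y j) := fun i j =>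
    hcr.mul_right.mul_right
  have hP1 : ContDiff ℝ 1 (fun y => K * ρ t y ^ γ) := by
    have h1 : ContDiff ℝ ((1 : ℕ) : WithTop ℕ∞) (ρ t) := by exact_mod_cast hr
    have h2 := h1.rpow_const_of_le (p := γ) (by simpa using hγ)
    exact contDiff_const.mul (by exact_mod_cast h2)
  have hPc : HasCompactSupport (fun y => K * ρ t y ^ γ) := by
    refine HasCompactSupport.intro hcr fun x hx => ?_
    rw [image_eq_zero_of_notMem_tsupport hx, Real.zero_rpow (by linarith)]; simp
  have hcoord : ∀ j : Fin 2, ContDiff ℝ 1 (fun x : Euc 2 => x j) := fun j =>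
    contDiff_euclidean.1 contDiff_id j
  have hpot : ∀ (x : Euc 2) (j : Fin 2), epartial j (potential 2 g ρ t) x
      = g * wconv (ρ t) (EuclideanSpace.single j 1) x := by
    intro x j
    unfold epartial
    have : potential 2 g ρ t = fun x => g * ∫ y, Real.log ‖x - y‖ * ρ t y := by
      ext x; simp [potential, green]
    rw [this, fderiv_const_mul (pot_diff _ hr hcr x)]
    rw [← pot_fderiv _ hr hcr]; rfl
  have hpt : ∀ (x : Euc 2) (j : Fin 2), deriv (fun s => x j * (ρ s x * u s x j)) t
      = - ((∑ i : Fin 2, x j * fderiv ℝ (fun y => ρ t y * u t y i * u t y j) x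
            (EuclideanSpace.single i 1))
          + x j * fderiv ℝ (fun y => K * ρ t y ^ γ) x (EuclideanSpace.single j 1)
          + g * (ρ t x * x j * wconv (ρ t) (EuclideanSpace.single j 1) x)) := by
    intro x j
    have hd : DifferentiableAt ℝ (fun s => ρ s x * u s x j) t :=
      ((hsol.rho_C1.mul (contDiff_euclidean.1 hsol.u_C1 j)).comp
        (contDiff_prodMk_left x)).differentiable one_ne_zero t
    rw [deriv_const_mul _ hd]
    have := hsol.momentum_eq t ht.le (EReal.coe_lt_top t) x j
    rw [hpot] at this
    unfold epartial at this
    rw [← Finset.mul_sum]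
    linear_combination x j * this
  have iA : ∀ i j : Fin 2, Integrable fun x : Euc 2 =>
      x j * fderiv ℝ (fun y => ρ t y * u t y i * u t y j) x (EuclideanSpace.single i 1) := by
    intro i j
    have c2 := ((hA1 i j).continuous_fderiv one_ne_zero).clm_apply
      (continuous_const (y := (EuclideanSpace.single i 1 : Euc 2)))
    exact ((hcoord j).continuous.mul c2).integrable_of_hasCompactSupport
      ((hAc i j).fderiv_apply ℝ _).mul_left
  have iP : ∀ j : Fin 2, Integrable fun x : Euc 2 =>
      x j * fderiv ℝ (fun y => K * ρ t y ^ γ) x (EuclideanSpace.single j 1) := by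
    intro j
    have c2 := (hP1.continuous_fderiv one_ne_zero).clm_apply
      (continuous_const (y := (EuclideanSpace.single j 1 : Euc 2)))
    exact ((hcoord j).continuous.mul c2).integrable_of_hasCompactSupport
      (hPc.fderiv_apply ℝ _).mul_left
  have iW : ∀ j : Fin 2, Integrable fun x : Euc 2 =>
      ρ t x * x j * wconv (ρ t) (EuclideanSpace.single j 1) x := by
    intro j
    exact ((hr.continuous.mul (hcoord j).continuous).mul
      (wconv_cont _ hr hcr _)).integrable_of_hasCompactSupport hcr.mul_right.mul_right
  have hj : ∀ j : Fin 2, ∫ x : Euc 2, deriv (fun s => x j * (ρ s x * u s x j)) t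
      = (∫ x, ρ t x * u t x j * u t x j) + (∫ x, K * ρ t x ^ γ)
        - g * ∫ x : Euc 2, ρ t x * x j * wconv (ρ t) (EuclideanSpace.single j 1) x := by
    intro j
    simp only [hpt]
    rw [integral_neg, integral_add (Integrable.fun_add (integrable_finsetSum _ fun i _ => iA i j) (iP j))
      ((iW j).const_mul g), integral_add (integrable_finsetSum _ fun i _ => iA i j) (iP j),
      integral_finsetSum _ (fun i _ => iA i j), integral_const_mul]
    rw [ibp _ _ (hcoord j) hP1 hPc]
    have : ∀ i : Fin 2, ∫ x : Euc 2, x j * fderiv ℝ (fun y => ρ t y * u t y i * u t y j) x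
        (EuclideanSpace.single i 1) = if i = j then - ∫ x, ρ t x * u t x j * u t x j else 0 := by
      intro i
      rw [ibp _ _ (hcoord j) (hA1 i j) (hAc i j)]
      simp only [fderiv_coord]
      split_ifs with hij
      · subst hij; simp
      · simp
    simp only [this, fderiv_coord]
    simp
    ring
  simp only [hj]
  have iK : ∀ j : Fin 2, Integrable fun x => ρ t x * u t x j * u t x j := fun j =>
    (hA1 j j).continuous.integrable_of_hasCompactSupport (hAc j j)
  have iQ : Integrable fun x => K * ρ t x ^ γ :=
    hP1.continuous.integrable_of_hasCompactSupport hPc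
  have hv := virial (ρ t) hr hcr
  have hE : ∫ x, (ρ t x * ‖u t x‖ ^ 2 + 2 * (K * ρ t x ^ γ))
      = (∫ x, ρ t x * u t x 0 * u t x 0) + (∫ x, ρ t x * u t x 1 * u t x 1)
        + 2 * ∫ x, K * ρ t x ^ γ := by
    rw [← integral_add (iK 0) (iK 1), ← integral_const_mul,
      ← integral_add ((iK 0).fun_add (iK 1)) (iQ.const_mul 2)]
    congr 1; ext x
    rw [EuclideanSpace.real_norm_sq_eq, Fin.sum_univ_two]
    ring
  rw [hE]
  rw [Fin.sum_univ_two] at hv ⊢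
  linear_combination (-g) * hv

end main

/-- A classical solution of the 2-D Euler–Poisson equations without
damping with `2∫_Ω (ρ|u|² + 2P) dx < gM² - ε` on its whole lifespan `[0,T)`
cannot be global: `T` must be finite. -/
theorem euler_poisson_2d_nonglobal (K γ g : ℝ) (hK : 0 < K) (hγ : 1 ≤ γ) (hg : 0 < g)
    (Ω : Set (Euc 2)) (T : EReal) (hT : 0 < T)
    (ρ : ℝ → Euc 2 → ℝ) (u : ℝ → Euc 2 → Euc 2)
    (hsol : IsEPSolution 2 K γ 0 g Ω T ρ u)
    (ε : ℝ) (hε : 0 < ε)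
    (hineq : ∀ t : ℝ, 0 ≤ t → (t : EReal) < T →
      2 * (∫ x in Ω, (ρ t x * ‖u t x‖ ^ 2 + 2 * (K * ρ t x ^ γ))) <
        g * (∫ x in Ω, ρ t x) ^ 2 - ε) :
    T < ⊤ := by
  by_contra hT'
  have hTop : T = ⊤ := not_lt_top_iff.1 hT'
  subst hTop
  have hF : ∀ t, 0 < t → ∃ d, HasDerivAt (Fm ρ u) d t ∧ d ≤ - ε / 2 := by
    intro t ht
    refine ⟨_, deriv_F hγ hsol t ht, ?_⟩
    have h := hineq t ht.le (EReal.coe_lt_top t)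
    rw [setIntegral_eq_integral_of_forall_compl_eq_zero (fun x hx => by
        rw [sol_zero hsol t ht.le x hx, Real.zero_rpow (by linarith)]; simp),
      setIntegral_eq_integral_of_forall_compl_eq_zero (fun x hx => sol_zero hsol t ht.le x hx)] at h
    linarith
  have hanti : AntitoneOn (fun t => Fm ρ u t + ε / 2 * t) (Set.Ici 1) := by
    have hd : ∀ t : ℝ, 0 < t → ∃ d, HasDerivAt (fun t => Fm ρ u t + ε / 2 * t) d t ∧ d ≤ 0 := by
      intro t ht
      obtain ⟨d, h1, h2⟩ := hF t ht
      refine ⟨_, h1.add ((hasDerivAt_id t).const_mul (ε / 2)), ?_⟩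
      linarith
    refine antitoneOn_of_deriv_nonpos (convex_Ici 1) ?_ ?_ ?_
    · intro t ht
      obtain ⟨d, h1, _⟩ := hd t (lt_of_lt_of_le one_pos ht)
      exact h1.continuousAt.continuousWithinAt
    · intro t ht
      rw [interior_Ici] at ht
      obtain ⟨d, h1, _⟩ := hd t (lt_trans one_pos ht)
      exact h1.differentiableAt.differentiableWithinAt
    · intro t ht
      rw [interior_Ici] at ht
      obtain ⟨d, h1, h2⟩ := hd t (lt_trans one_pos ht)
      rw [h1.deriv]; exact h2
  set H : ℝ → ℝ := fun s => ∫ x, ρ s x * ‖x‖ ^ 2 with hH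
  set c : ℝ := 2 * Fm ρ u 1 + ε with hc
  have hanti2 : AntitoneOn (fun t => H t + (ε / 2 * t ^ 2 - c * t)) (Set.Ici 1) := by
    have hd : ∀ t : ℝ, 1 ≤ t → ∃ d, HasDerivAt (fun t => H t + (ε / 2 * t ^ 2 - c * t)) d t ∧ d ≤ 0 := by
      intro t ht
      have h1 := deriv_H hsol t (by linarith)
      refine ⟨_, h1.add (((hasDerivAt_pow 2 t).const_mul (ε / 2)).sub
        ((hasDerivAt_id t).const_mul c)), ?_⟩
      have h2 := hanti (Set.mem_Ici.2 le_rfl) (Set.mem_Ici.2 ht) ht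
      simp only at h2
      push_cast
      simp only [hc, Nat.add_one_sub_one, pow_one]
      linarith
    refine antitoneOn_of_deriv_nonpos (convex_Ici 1) ?_ ?_ ?_
    · intro t ht
      obtain ⟨d, h1, _⟩ := hd t ht
      exact h1.continuousAt.continuousWithinAt
    · intro t ht
      rw [interior_Ici] at ht
      obtain ⟨d, h1, _⟩ := hd t (le_of_lt ht)
      exact h1.differentiableAt.differentiableWithinAt
    · intro t ht
      rw [interior_Ici] at ht
      obtain ⟨d, h1, h2⟩ := hd t (le_of_lt ht)
      rw [h1.deriv]; exact h2
  have hpos : ∀ t, 0 ≤ H t := fun t =>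
    integral_nonneg fun x => mul_nonneg (hsol.rho_nonneg t x) (by positivity)
  set D : ℝ := H 1 + (ε / 2 - c) with hD
  have hle : ∀ t : ℝ, 1 ≤ t → ε / 2 * t ^ 2 - c * t ≤ D := by
    intro t ht
    have h2 := hanti2 (Set.mem_Ici.2 le_rfl) (Set.mem_Ici.2 ht) ht
    simp only [one_pow, mul_one] at h2
    have := hpos t
    linarith
  set t₀ : ℝ := 1 + 2 * (|c| + |D| + 1) / ε with ht₀
  have hq : 0 ≤ 2 * (|c| + |D| + 1) / ε := by positivity
  have h1 := hle t₀ (by linarith)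
  have h2 : ε / 2 * t₀ = ε / 2 + (|c| + |D| + 1) := by rw [ht₀]; field_simp
  have h3 : ε / 2 * t₀ ^ 2 - c * t₀ = t₀ * (ε / 2 + (|c| + |D| + 1) - c) := by rw [← h2]; ring
  have h4 := le_abs_self c
  have h5 := le_abs_self D
  have h6 := abs_nonneg D
  have h7 : |D| + 1 ≤ t₀ * (ε / 2 + (|c| + |D| + 1) - c) := by nlinarith
  linarith
end
end

section
/- Let N = 2 and let ρ : R² → [0,∞) be a C¹ function with compact support, P = Kρ^γ with K > 0 and γ > 1, and Φ(x) = g∫_{R²} log|x−y| ρ(y) dy with g > 0. If the hydrostatic equilibrium equation ∇P(x) = −ρ(x)∇Φ(x) holds for all x, then ∫ P(x) dx = gM²/4, where M = ∫ ρ(x) dx is the total mass. -/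
open MeasureTheory Real Filter
open scoped RealInnerProductSpace Topology

noncomputable section

/-- `log ‖x‖` is locally integrable. -/
lemma aux_log_locInt : LocallyIntegrable (fun x : Euc 2 => Real.log ‖x‖) := by
  have key : ∀ R : ℝ, IntegrableOn (fun x : Euc 2 => Real.log ‖x‖) (Metric.closedBall 0 R) := by
    intro R
    have h1 : Integrable (fun x : Euc 2 => (Set.Iic R).indicator Real.log ‖x‖) := by
      rw [integrable_fun_norm_addHaar volume (f := (Set.Iic R).indicator Real.log)]
      have h2 : IntegrableOn (fun y : ℝ => y * Real.log y) (Set.Ioc 0 R) :=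
        (Real.continuous_mul_log.continuousOn.integrableOn_compact isCompact_Icc).mono_set
          Set.Ioc_subset_Icc_self
      have h3 : Integrable ((Set.Iic R).indicator (fun y : ℝ => y * Real.log y))
          (volume.restrict (Set.Ioi 0)) := by
        rw [integrable_indicator_iff measurableSet_Iic, IntegrableOn,
          Measure.restrict_restrict measurableSet_Iic, Set.inter_comm, Set.Ioi_inter_Iic]
        exact h2
      refine h3.congr (Eventually.of_forall fun y => ?_)
      simp only [finrank_euclideanSpace, Fintype.card_fin, Set.indicator]
      split_ifs <;> simp
    have h4 := h1.integrableOn (s := Metric.closedBall 0 R)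
    refine h4.congr_fun (fun x hx => ?_) Metric.isClosed_closedBall.measurableSet
    have : ‖x‖ ≤ R := by simpa using hx
    simp [Set.indicator, this]
  intro x
  refine ⟨Metric.closedBall 0 (‖x‖ + 1), ?_, key _⟩
  refine Filter.mem_of_superset (Metric.isOpen_ball.mem_nhds (?_ : x ∈ Metric.ball 0 (‖x‖ + 1)))
    Metric.ball_subset_closedBall
  simp

/-- Regularised logarithmic kernel. -/
def auxL (ε : ℝ) (z : Euc 2) : ℝ := (1 / 2) * Real.log (‖z‖ ^ 2 + ε)

lemma auxL_zero (z : Euc 2) : auxL 0 z = Real.log ‖z‖ := by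
  simp [auxL, Real.log_pow]

lemma auxL_meas (ε : ℝ) : Measurable (auxL ε) := by
  unfold auxL; fun_prop

lemma auxL_contDiff {ε : ℝ} (hε : 0 < ε) : ContDiff ℝ 1 (auxL ε) := by
  unfold auxL
  refine contDiff_const.mul (ContDiff.log ?_ ?_)
  · exact (contDiff_norm_sq ℝ).add contDiff_const
  · intro x; positivity

lemma auxL_hasFDerivAt {ε : ℝ} (hε : 0 < ε) (z v : Euc 2) :
    fderiv ℝ (auxL ε) z v = ⟪v, z⟫ / (‖z‖ ^ 2 + ε) := by
  have h0 : ‖z‖ ^ 2 + ε ≠ 0 := by positivity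
  have h1 : HasFDerivAt (fun z : Euc 2 => ‖z‖ ^ 2 + ε) (2 • (innerSL ℝ z)) z :=
    (hasStrictFDerivAt_norm_sq z).hasFDerivAt.add_const ε
  have h2 := (h1.log h0).const_mul (1 / 2 : ℝ)
  have h3 : fderiv ℝ (auxL ε) z = _ := h2.fderiv
  rw [h3]
  simp [real_inner_comm]
  field_simp

lemma auxL_bound {ε : ℝ} (h0 : 0 < ε) (h1 : ε < 1) {z : Euc 2} (hz : z ≠ 0) :
    |auxL ε z| ≤ |Real.log ‖z‖| + auxL 1 z := by
  have hp : 0 < ‖z‖ ^ 2 := by positivity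
  have e1 : auxL 0 z ≤ auxL ε z := by
    unfold auxL
    gcongr
  have e2 : auxL ε z ≤ auxL 1 z := by
    unfold auxL
    gcongr
  have e3 : 0 ≤ auxL 1 z := by
    unfold auxL
    have := Real.log_nonneg (x := ‖z‖ ^ 2 + 1) (by linarith)
    positivity
  rw [auxL_zero] at e1
  rw [abs_le]
  constructor
  · have := neg_abs_le (Real.log ‖z‖); linarith
  · have := abs_nonneg (Real.log ‖z‖); linarith

lemma auxL_tendsto {z : Euc 2} (hz : z ≠ 0) :
    Tendsto (fun ε => auxL ε z) (𝓝[>] 0) (𝓝 (auxL 0 z)) := by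
  have : ContinuousAt (fun ε => auxL ε z) 0 := by
    unfold auxL
    refine continuousAt_const.mul (ContinuousAt.log (by fun_prop) ?_)
    have : 0 < ‖z‖ := norm_pos_iff.2 hz
    positivity
  exact this.tendsto.mono_left nhdsWithin_le_nhds

/-- `H ε x = ∫ L_ε(t) x·∇ρ(x-t) dt`. -/
def auxH (ρ : Euc 2 → ℝ) (ε : ℝ) (x : Euc 2) : ℝ := ∫ t, auxL ε t * fderiv ℝ ρ (x - t) x

lemma ae_ne_euc (a : Euc 2) : ∀ᵐ t : Euc 2, t ≠ a := by
  simp [ae_iff]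

lemma auxH_eq {ρ : Euc 2 → ℝ} (hρ : ContDiff ℝ 1 ρ) (hsupp : HasCompactSupport ρ)
    {ε : ℝ} (hε : 0 < ε) (x : Euc 2) :
    auxH ρ ε x = ∫ y, ρ y * (⟪x, x - y⟫ / (‖x - y‖ ^ 2 + ε)) := by
  have hL := auxL_contDiff hε
  have hρ' : Continuous (fderiv ℝ ρ) := hρ.continuous_fderiv one_ne_zero
  have hs' : HasCompactSupport (fun y => fderiv ℝ ρ y x) := hsupp.fderiv_apply ℝ x
  have hf : ContDiff ℝ 1 (fun y => auxL ε (x - y)) := hL.comp (contDiff_const.sub contDiff_id)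
  have hf' : Continuous (fderiv ℝ (fun y => auxL ε (x - y))) := hf.continuous_fderiv one_ne_zero
  have h1 : auxH ρ ε x = ∫ y, auxL ε (x - y) * fderiv ℝ ρ y x := by
    unfold auxH
    rw [← integral_sub_left_eq_self _ volume x]
    simp
  rw [h1, integral_mul_fderiv_eq_neg_fderiv_mul_of_integrable, ← integral_neg]
  · congr 1
    ext y
    have : fderiv ℝ (fun y => auxL ε (x - y)) y x = - (⟪x, x - y⟫ / (‖x - y‖ ^ 2 + ε)) := by
      have hd : HasFDerivAt (fun y => auxL ε (x - y))
          ((fderiv ℝ (auxL ε) (x - y)).comp (-(ContinuousLinearMap.id ℝ (Euc 2)))) y :=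
        ((hL.differentiable one_ne_zero) (x - y)).hasFDerivAt.comp y
          ((hasFDerivAt_id y).const_sub x)
      rw [← auxL_hasFDerivAt hε, hd.fderiv]
      simp
    rw [this]; ring
  · refine Continuous.integrable_of_hasCompactSupport ?_ (hsupp.mul_left)
    exact (hf'.clm_apply continuous_const).mul hρ.continuous
  · refine Continuous.integrable_of_hasCompactSupport ?_ (hs'.mul_left)
    exact hf.continuous.mul (hρ'.clm_apply continuous_const)
  · refine Continuous.integrable_of_hasCompactSupport ?_ (hsupp.mul_left)
    exact hf.continuous.mul hρ.continuous
  · intro y _; exact (hf.differentiable one_ne_zero) y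
  · intro y _; exact (hρ.differentiable one_ne_zero) y

lemma aux_prod_int {ρ : Euc 2 → ℝ} (hρ : Continuous ρ) (hsupp : HasCompactSupport ρ)
    {k : Euc 2 × Euc 2 → ℝ} (hk : Continuous k) :
    Integrable (fun p : Euc 2 × Euc 2 => ρ p.1 * (ρ p.2 * k p)) (volume.prod volume) := by
  refine Continuous.integrable_of_hasCompactSupport (by fun_prop) ?_
  refine HasCompactSupport.intro (hsupp.isCompact.prod hsupp.isCompact) ?_
  rintro ⟨a, b⟩ hab
  by_cases ha : a ∈ tsupport ρ
  · have hb : b ∉ tsupport ρ := fun hb => hab ⟨ha, hb⟩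
    simp [image_eq_zero_of_notMem_tsupport hb]
  · simp [image_eq_zero_of_notMem_tsupport ha]

lemma aux_sym {ρ : Euc 2 → ℝ} (hρ : ContDiff ℝ 1 ρ) (hsupp : HasCompactSupport ρ)
    {ε : ℝ} (hε : 0 < ε) :
    ∫ x, ρ x * auxH ρ ε x
      = (1 / 2) * ∫ x, ρ x * ∫ y, ρ y * (‖x - y‖ ^ 2 / (‖x - y‖ ^ 2 + ε)) := by
  have hne : ∀ p : Euc 2 × Euc 2, ‖p.1 - p.2‖ ^ 2 + ε ≠ 0 := fun p => by positivity
  have i1 := aux_prod_int hρ.continuous hsupp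
    (k := fun p => ⟪p.1, p.1 - p.2⟫ / (‖p.1 - p.2‖ ^ 2 + ε))
    (Continuous.div (by fun_prop) (by fun_prop) hne)
  have i2 := aux_prod_int hρ.continuous hsupp
    (k := fun p => -⟪p.2, p.1 - p.2⟫ / (‖p.1 - p.2‖ ^ 2 + ε))
    (Continuous.div (by fun_prop) (by fun_prop) hne)
  have i3 := aux_prod_int hρ.continuous hsupp
    (k := fun p => ‖p.1 - p.2‖ ^ 2 / (‖p.1 - p.2‖ ^ 2 + ε))
    (Continuous.div (by fun_prop) (by fun_prop) hne)
  simp_rw [auxH_eq hρ hsupp hε, ← integral_const_mul (ρ _)]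
  have e1 := integral_prod _ i1
  have e3 := integral_prod _ i3
  simp only at e1 e3
  rw [← e1, ← e3]
  have e2 : ∫ p : Euc 2 × Euc 2, ρ p.1 * (ρ p.2 * (⟪p.1, p.1 - p.2⟫ / (‖p.1 - p.2‖ ^ 2 + ε)))
        ∂(volume.prod volume)
      = ∫ p : Euc 2 × Euc 2, ρ p.1 * (ρ p.2 * (-⟪p.2, p.1 - p.2⟫ / (‖p.1 - p.2‖ ^ 2 + ε)))
        ∂(volume.prod volume) := by
    rw [← integral_prod_swap]
    congr 1
    ext p
    simp only [Prod.fst_swap, Prod.snd_swap]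
    rw [norm_sub_rev p.2 p.1, ← inner_neg_right, neg_sub]
    ring
  have e4 : ∫ p : Euc 2 × Euc 2, ρ p.1 * (ρ p.2 * (‖p.1 - p.2‖ ^ 2 / (‖p.1 - p.2‖ ^ 2 + ε)))
        ∂(volume.prod volume)
      = (∫ p : Euc 2 × Euc 2, ρ p.1 * (ρ p.2 * (⟪p.1, p.1 - p.2⟫ / (‖p.1 - p.2‖ ^ 2 + ε)))
        ∂(volume.prod volume)) + 
       ∫ p : Euc 2 × Euc 2, ρ p.1 * (ρ p.2 * (-⟪p.2, p.1 - p.2⟫ / (‖p.1 - p.2‖ ^ 2 + ε)))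
        ∂(volume.prod volume) := by
    rw [← integral_add i1 i2]
    congr 1
    ext p
    rw [← real_inner_self_eq_norm_sq (p.1 - p.2)]
    nth_rewrite 1 [inner_sub_left]
    ring
  rw [e4, ← e2]; ring

lemma aux_lim1 {ρ : Euc 2 → ℝ} (hρ : ContDiff ℝ 1 ρ) (hsupp : HasCompactSupport ρ)
    (hnn : ∀ x, 0 ≤ ρ x) :
    Tendsto (fun ε : ℝ => ∫ x, ρ x * ∫ y, ρ y * (‖x - y‖ ^ 2 / (‖x - y‖ ^ 2 + ε))) (𝓝[>] 0)
      (𝓝 ((∫ x, ρ x) ^ 2)) := by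
  have hi : Integrable ρ := hρ.continuous.integrable_of_hasCompactSupport hsupp
  have hm : Measurable ρ := hρ.continuous.measurable
  have hpos : ∀ᶠ ε : ℝ in 𝓝[>] 0, 0 < ε := self_mem_nhdsWithin
  have hq : ∀ ε : ℝ, 0 < ε → ∀ z y : Euc 2,
      ‖ρ y * (‖z‖ ^ 2 / (‖z‖ ^ 2 + ε))‖ ≤ ρ y := by
    intro ε hε z y
    rw [norm_mul, Real.norm_of_nonneg (hnn y)]
    have : ‖‖z‖ ^ 2 / (‖z‖ ^ 2 + ε)‖ ≤ 1 := by
      rw [Real.norm_of_nonneg (by positivity)]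
      rw [div_le_one (by positivity)]
      linarith
    exact mul_le_of_le_one_right (hnn y) this
  have e : (∫ x, ρ x) ^ 2 = ∫ x, ρ x * ∫ y, ρ y := by
    rw [integral_mul_const, sq]
  rw [e]
  refine tendsto_integral_filter_of_dominated_convergence (fun x => ρ x * ∫ y, ρ y) ?_ ?_ ?_ ?_
  · refine Eventually.of_forall fun ε => ?_
    refine AEStronglyMeasurable.mul hm.aestronglyMeasurable ?_
    refine StronglyMeasurable.aestronglyMeasurable ?_
    refine StronglyMeasurable.integral_prod_right
      (f := fun x y => ρ y * (‖x - y‖ ^ 2 / (‖x - y‖ ^ 2 + ε))) ?_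
    refine Measurable.stronglyMeasurable ?_
    simp only [Function.uncurry_def]
    fun_prop
  · filter_upwards [hpos] with ε hε
    refine Eventually.of_forall fun x => ?_
    rw [norm_mul, Real.norm_of_nonneg (hnn x)]
    refine mul_le_mul_of_nonneg_left ?_ (hnn x)
    exact norm_integral_le_of_norm_le hi (Eventually.of_forall fun y => hq ε hε _ y)
  · exact hi.mul_const _
  · refine Eventually.of_forall fun x => ?_
    refine Tendsto.const_mul _ ?_
    refine tendsto_integral_filter_of_dominated_convergence ρ ?_ ?_ hi ?_
    · refine Eventually.of_forall fun ε => ?_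
      exact Measurable.aestronglyMeasurable (by fun_prop)
    · filter_upwards [hpos] with ε hε
      exact Eventually.of_forall fun y => hq ε hε _ y
    · filter_upwards [ae_ne_euc x] with y hy
      have hz : ‖x - y‖ ^ 2 ≠ 0 := by
        have : 0 < ‖x - y‖ := norm_pos_iff.2 (sub_ne_zero.2 hy.symm)
        positivity
      have hc : ContinuousAt (fun ε : ℝ => ρ y * (‖x - y‖ ^ 2 / (‖x - y‖ ^ 2 + ε))) 0 := by
        refine continuousAt_const.mul (ContinuousAt.div continuousAt_const (by fun_prop) ?_)
        simpa using hz
      have := hc.tendsto.mono_left (nhdsWithin_le_nhds (s := Set.Ioi 0))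
      simpa [div_self hz] using this

lemma aux_lim2 {ρ : Euc 2 → ℝ} (hρ : ContDiff ℝ 1 ρ) (hsupp : HasCompactSupport ρ)
    (hnn : ∀ x, 0 ≤ ρ x) :
    Tendsto (fun ε : ℝ => ∫ x, ρ x * auxH ρ ε x) (𝓝[>] 0)
      (𝓝 (∫ x, ρ x * auxH ρ 0 x)) := by
  have hi : Integrable ρ := hρ.continuous.integrable_of_hasCompactSupport hsupp
  have hm : Measurable ρ := hρ.continuous.measurable
  have hρ' : Continuous (fderiv ℝ ρ) := hρ.continuous_fderiv one_ne_zero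
  have hev : ∀ᶠ ε : ℝ in 𝓝[>] 0, ε ∈ Set.Ioo (0 : ℝ) 1 := Ioo_mem_nhdsGT one_pos
  obtain ⟨R, hR⟩ : ∃ R, tsupport ρ ⊆ Metric.closedBall 0 R :=
    hsupp.isCompact.isBounded.subset_closedBall 0
  obtain ⟨C, hC⟩ := hρ'.bounded_above_of_compact_support (hsupp.fderiv ℝ)
  have hC0 : 0 ≤ C := (norm_nonneg _).trans (hC 0)
  set b : Euc 2 → ℝ := (Metric.closedBall 0 (R + R)).indicator
    (fun t => (|Real.log ‖t‖| + auxL 1 t) * (C * R)) with hb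
  have hbi : Integrable b := by
    rw [hb, integrable_indicator_iff Metric.isClosed_closedBall.measurableSet]
    refine Integrable.mul_const (Integrable.add ?_ ?_) _
    · exact (aux_log_locInt.integrableOn_isCompact (isCompact_closedBall _ _)).abs
    · exact (auxL_contDiff one_pos).continuous.continuousOn.integrableOn_compact
        (isCompact_closedBall _ _)
  have hbound : ∀ ε ∈ Set.Ioo (0 : ℝ) 1, ∀ x, x ∈ tsupport ρ → ∀ᵐ t : Euc 2,
      ‖auxL ε t * fderiv ℝ ρ (x - t) x‖ ≤ b t := by
    intro ε hε x hx
    have hxR : ‖x‖ ≤ R := by simpa using hR hx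
    filter_upwards [ae_ne_euc 0] with t ht
    have hL := auxL_bound hε.1 hε.2 ht
    have hL0 := (abs_nonneg _).trans hL
    have hR0 := (norm_nonneg _).trans hxR
    by_cases hxt : x - t ∈ tsupport ρ
    · have h1 : ‖x - t‖ ≤ R := by simpa using hR hxt
      have h2 : t ∈ Metric.closedBall (0 : Euc 2) (R + R) := by
        have : t = x - (x - t) := by abel
        rw [mem_closedBall_zero_iff, this]
        exact (norm_sub_le _ _).trans (add_le_add hxR h1)
      rw [hb, Set.indicator_of_mem h2, norm_mul]
      refine mul_le_mul hL ?_ (norm_nonneg _) hL0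
      exact ((fderiv ℝ ρ (x - t)).le_opNorm x).trans (mul_le_mul (hC _) hxR (norm_nonneg _) hC0)
    · have h0 : fderiv ℝ ρ (x - t) = 0 := by
        by_contra h
        exact hxt (support_fderiv_subset ℝ h)
      rw [h0]
      simp only [_root_.zero_apply, mul_zero, norm_zero, hb]
      exact Set.indicator_apply_nonneg fun _ => by positivity
  refine tendsto_integral_filter_of_dominated_convergence (fun x => ρ x * ∫ t, b t) ?_ ?_ ?_ ?_
  · refine Eventually.of_forall fun ε => ?_
    refine AEStronglyMeasurable.mul hm.aestronglyMeasurable ?_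
    refine StronglyMeasurable.aestronglyMeasurable ?_
    refine StronglyMeasurable.integral_prod_right
      (f := fun x t => auxL ε t * fderiv ℝ ρ (x - t) x) ?_
    refine Measurable.stronglyMeasurable ?_
    simp only [Function.uncurry_def]
    refine ((auxL_meas ε).comp measurable_snd).mul ?_
    exact ((hρ'.comp (continuous_fst.sub continuous_snd)).clm_apply continuous_fst).measurable
  · filter_upwards [hev] with ε hε
    refine Eventually.of_forall fun x => ?_
    rw [norm_mul, Real.norm_of_nonneg (hnn x)]
    by_cases hx : x ∈ tsupport ρ
    · refine mul_le_mul_of_nonneg_left ?_ (hnn x)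
      exact norm_integral_le_of_norm_le hbi (hbound ε hε x hx)
    · simp [image_eq_zero_of_notMem_tsupport hx]
  · exact hi.mul_const _
  · refine Eventually.of_forall fun x => ?_
    by_cases hx : x ∈ tsupport ρ
    · refine Tendsto.const_mul _ ?_
      refine tendsto_integral_filter_of_dominated_convergence b ?_ ?_ hbi ?_
      · refine Eventually.of_forall fun ε => ?_
        refine Measurable.aestronglyMeasurable ((auxL_meas ε).mul ?_)
        exact ((hρ'.comp (continuous_const.sub continuous_id)).clm_apply
          continuous_const).measurable
      · filter_upwards [hev] with ε hε
        exact hbound ε hε x hx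
      · filter_upwards [ae_ne_euc 0] with t ht
        exact (auxL_tendsto ht).mul_const _
    · simp [image_eq_zero_of_notMem_tsupport hx]

lemma aux_main {ρ : Euc 2 → ℝ} (hρ : ContDiff ℝ 1 ρ) (hsupp : HasCompactSupport ρ)
    (hnn : ∀ x, 0 ≤ ρ x) :
    ∫ x, ρ x * auxH ρ 0 x = (1 / 2) * (∫ x, ρ x) ^ 2 := by
  refine tendsto_nhds_unique (aux_lim2 hρ hsupp hnn) ?_
  refine ((aux_lim1 hρ hsupp hnn).const_mul (1 / 2)).congr' ?_
  filter_upwards [self_mem_nhdsWithin] with ε hε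
  exact (aux_sym hρ hsupp hε).symm

lemma aux_fderiv {ρ : Euc 2 → ℝ} (hρ : ContDiff ℝ 1 ρ) (hsupp : HasCompactSupport ρ)
    (g : ℝ) (Φ : Euc 2 → ℝ) (hΦ : ∀ x, Φ x = g * ∫ y, Real.log ‖x - y‖ * ρ y) (x : Euc 2) :
    fderiv ℝ Φ x x = g * auxH ρ 0 x := by
  have h1 := hsupp.hasFDerivAt_convolution_right (ContinuousLinearMap.mul ℝ ℝ)
    aux_log_locInt hρ x
  have h2 : Φ = fun x => g * (convolution (fun x : Euc 2 => Real.log ‖x‖) ρ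
      (ContinuousLinearMap.mul ℝ ℝ) volume) x := by
    ext x
    rw [hΦ, convolution_def, ← integral_sub_left_eq_self _ volume x]
    simp
  rw [h2, (h1.const_mul g).fderiv]
  simp only [_root_.smul_apply, smul_eq_mul]
  rw [convolution_precompR_apply _ aux_log_locInt (hsupp.fderiv ℝ)
    (hρ.continuous_fderiv one_ne_zero)]
  simp [convolution_def, auxH, auxL_zero]

lemma aux_virial {P : Euc 2 → ℝ} (hP : ContDiff ℝ 1 P) (hs : HasCompactSupport P) :
    ∫ x, fderiv ℝ P x x = - (2 * ∫ x, P x) := by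
  have hP' : Continuous (fderiv ℝ P) := hP.continuous_fderiv one_ne_zero
  have hi : Integrable P := hP.continuous.integrable_of_hasCompactSupport hs
  have key : ∀ i : Fin 2, Integrable (fun x : Euc 2 =>
        x i * fderiv ℝ P x (EuclideanSpace.single i 1)) ∧
      ∫ x : Euc 2, x i * fderiv ℝ P x (EuclideanSpace.single i 1) = - ∫ x, P x := by
    intro i
    have hc : Continuous (fun x : Euc 2 => x i) := by fun_prop
    have hf : ∀ x : Euc 2, fderiv ℝ (fun x : Euc 2 => x i) x (EuclideanSpace.single i 1) = 1 := by
      intro x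
      have : HasFDerivAt (fun x : Euc 2 => x i) (EuclideanSpace.proj (𝕜 := ℝ) i) x :=
        (EuclideanSpace.proj (𝕜 := ℝ) i : Euc 2 →L[ℝ] ℝ).hasFDerivAt
      rw [this.fderiv]
      simp
    have h1 : Integrable (fun x : Euc 2 => x i * fderiv ℝ P x (EuclideanSpace.single i 1)) :=
      Continuous.integrable_of_hasCompactSupport (hc.mul (hP'.clm_apply continuous_const))
        (hs.fderiv_apply ℝ _).mul_left
    refine ⟨h1, ?_⟩
    rw [integral_mul_fderiv_eq_neg_fderiv_mul_of_integrable]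
    · simp [hf]
    · simpa [hf] using hi
    · exact h1
    · exact Continuous.integrable_of_hasCompactSupport (hc.mul hP.continuous) hs.mul_left
    · intro x _; fun_prop
    · intro x _; exact hP.differentiable one_ne_zero x
  have hx : ∀ x : Euc 2, fderiv ℝ P x x = x 0 * fderiv ℝ P x (EuclideanSpace.single 0 1)
      + x 1 * fderiv ℝ P x (EuclideanSpace.single 1 1) := by
    intro x
    have : x = x 0 • EuclideanSpace.single (0 : Fin 2) (1 : ℝ)
        + x 1 • EuclideanSpace.single (1 : Fin 2) (1 : ℝ) := by
      ext i; fin_cases i <;> simp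
    have h2 := congrArg (fderiv ℝ P x) this
    rw [map_add, map_smul, map_smul, smul_eq_mul, smul_eq_mul] at h2
    exact h2
  simp_rw [hx]
  rw [integral_add (key 0).1 (key 1).1, (key 0).2, (key 1).2]
  ring

/-- For a 2-D hydrostatic equilibrium `∇P = -ρ∇Φ` with
`P = Kρ^γ` and `Φ(x) = g∫ log|x-y| ρ(y) dy`, the total pressure integral is
`∫ P dx = gM²/4`. -/
theorem pressure_integral_2d (K γ g : ℝ) (hK : 0 < K) (hγ : 1 < γ) (hg : 0 < g)
    (ρ : Euc 2 → ℝ) (hρ : ContDiff ℝ 1 ρ) (hsupp : HasCompactSupport ρ)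
    (hnn : ∀ x, 0 ≤ ρ x)
    (Φ : Euc 2 → ℝ) (hΦ : ∀ x, Φ x = g * ∫ y, Real.log ‖x - y‖ * ρ y)
    (hhyd : ∀ x, gradient (fun z => K * ρ z ^ γ) x = -(ρ x) • gradient Φ x) :
    ∫ x, K * ρ x ^ γ = g * (∫ x, ρ x) ^ 2 / 4 := by
  have hP : ContDiff ℝ 1 (fun z => K * ρ z ^ γ) := by
    refine contDiff_const.mul ?_
    exact_mod_cast ContDiff.rpow_const_of_le (m := 1) (by exact_mod_cast hρ)
      (by exact_mod_cast hγ.le)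
  have hs : HasCompactSupport (fun z => K * ρ z ^ γ) := by
    refine hsupp.comp_left (g := fun r : ℝ => K * r ^ γ) ?_
    simp [Real.zero_rpow (by linarith : γ ≠ 0)]
  have h1 : ∀ x, fderiv ℝ (fun z => K * ρ z ^ γ) x x = - g * (ρ x * auxH ρ 0 x) := by
    intro x
    rw [← inner_gradient_left, hhyd, inner_smul_left, inner_gradient_left,
      aux_fderiv hρ hsupp g Φ hΦ]
    simp
    ring
  have h2 := aux_virial hP hs
  simp_rw [h1] at h2
  rw [integral_const_mul, aux_main hρ hsupp hnn] at h2
  linarith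
end
end

section
/- Let N ≥ 3 and let ρ : R^N → [0,∞) be a C¹ function with compact support, P = Kρ^γ with K > 0 and γ > 1, and Φ(x) = −g∫ ρ(y)/|x−y|^{N−2} dy with g > 0, satisfying the hydrostatic equilibrium equation ∇P(x) = −ρ(x)∇Φ(x) for all x. Then the virial identity N∫ P(x) dx = (g(N−2)/2) ∫∫ ρ(x)ρ(y)/|x−y|^{N−2} dy dx = −((N−2)/2) ∫ ρ(x)Φ(x) dx holds. -/
open MeasureTheory Real Filter
open scoped RealInnerProductSpace Topology

noncomputable section

lemma kern_locInt (N : ℕ) (hN : 1 ≤ N) (α : ℝ) (hα : α < N) :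
    LocallyIntegrable (fun z : Euc N => (‖z‖ ^ α)⁻¹) volume := by
  refine locallyIntegrable_of_norm_le_rpow (C := 1) (α := α) ?_ ?_ ?_ ?_
  · simpa using hN
  · simpa using hα
  · refine Filter.Eventually.of_forall fun x => ?_
    rw [Real.norm_of_nonneg (by positivity), Real.rpow_neg (norm_nonneg x), one_mul]
  · exact (by fun_prop : Measurable (fun z : Euc N => (‖z‖ ^ α)⁻¹)).aestronglyMeasurable

lemma euler_id (N : ℕ) (hN : 1 ≤ N) (α : ℝ) (hα : α < N) (f : Euc N → ℝ)
    (hf : ContDiff ℝ 1 f) (hc : HasCompactSupport f) :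
    ∫ z, fderiv ℝ f z z * (‖z‖ ^ α)⁻¹ = (α - N) * ∫ z, f z * (‖z‖ ^ α)⁻¹ := by
  have hk := kern_locInt N hN α hα
  have hf' : Continuous (fderiv ℝ f) := hf.continuous_fderiv (by norm_num)
  have hc' : HasCompactSupport (fderiv ℝ f) := hc.fderiv ℝ
  obtain ⟨M, hM⟩ := hf'.bounded_above_of_compact_support hc'
  obtain ⟨R, hR0, hR⟩ := hc'.isCompact.isBounded.exists_pos_norm_lt
  have hM0 : 0 ≤ M := (norm_nonneg _).trans (hM 0)
  have hkm : Measurable (fun z : Euc N => (‖z‖ ^ α)⁻¹) := by fun_prop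
  set bound : Euc N → ℝ := (Metric.closedBall (0 : Euc N) (2 * R)).indicator
    (fun z => (M * (2 * R)) * (‖z‖ ^ α)⁻¹) with hbound
  have key := (hasDerivAt_integral_of_dominated_loc_of_deriv_le (μ := (volume : Measure (Euc N)))
    (F := fun (s : ℝ) z => f (s • z) * (‖z‖ ^ α)⁻¹)
    (F' := fun (s : ℝ) z => fderiv ℝ f (s • z) z * (‖z‖ ^ α)⁻¹) (x₀ := (1 : ℝ))
    (s := Metric.ball 1 (1/2)) (bound := bound) (Metric.ball_mem_nhds _ (by norm_num))
    ?_ ?_ ?_ ?_ ?_ ?_).2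
  · have h2 : HasDerivAt (fun s : ℝ => s ^ (α - N) * ∫ z, f z * (‖z‖ ^ α)⁻¹)
        ((α - N) * ∫ z, f z * (‖z‖ ^ α)⁻¹) 1 := by
      have := (Real.hasDerivAt_rpow_const (x := 1) (p := α - N) (Or.inl one_ne_zero)).mul_const
        (∫ z, f z * (‖z‖ ^ α)⁻¹)
      simpa using this
    have h3 : (fun s : ℝ => ∫ z, f (s • z) * (‖z‖ ^ α)⁻¹) =ᶠ[𝓝 1]
        fun s : ℝ => s ^ (α - N) * ∫ z, f z * (‖z‖ ^ α)⁻¹ := by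
      filter_upwards [lt_mem_nhds (zero_lt_one' ℝ)] with s hs
      have e1 : ∀ z : Euc N, f (s • z) * (‖z‖ ^ α)⁻¹
          = s ^ α * (fun w => f w * (‖w‖ ^ α)⁻¹) (s • z) := by
        intro z
        have : s ^ α ≠ 0 := (Real.rpow_pos_of_pos hs α).ne'
        simp only [norm_smul, Real.norm_of_nonneg hs.le, Real.mul_rpow hs.le (norm_nonneg z)]
        rw [mul_inv]
        field_simp
      simp_rw [e1]
      rw [integral_const_mul,
        Measure.integral_comp_smul volume (fun w : Euc N => f w * (‖w‖ ^ α)⁻¹) s, Real.rpow_sub hs, Real.rpow_natCast,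
        abs_of_pos (by positivity)]
      simp [div_eq_mul_inv, mul_assoc]
    have := key.unique (h2.congr_of_eventuallyEq h3)
    simpa using this
  · refine Filter.Eventually.of_forall fun s => ?_
    exact ((hf.continuous.comp (continuous_const_smul s)).measurable.mul hkm).aestronglyMeasurable
  · simpa using hk.integrable_smul_left_of_hasCompactSupport hf.continuous hc
  · have : Continuous fun z : Euc N => fderiv ℝ f ((1:ℝ) • z) z :=
      (hf'.comp (continuous_const_smul (1:ℝ))).clm_apply continuous_id
    exact (this.measurable.mul hkm).aestronglyMeasurable
  · refine Filter.Eventually.of_forall fun z s hs => ?_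
    have hs' : 1/2 < s := by
      rw [Metric.mem_ball, Real.dist_eq, abs_lt] at hs; linarith [hs.1]
    by_cases hz : fderiv ℝ f (s • z) = 0
    · simp only [hz, hbound]
      simp only [ContinuousLinearMap.zero_apply, zero_mul, norm_zero]
      apply Set.indicator_nonneg
      intro z _; positivity
    · have h1 := hR _ (subset_tsupport _ hz)
      rw [norm_smul, Real.norm_of_nonneg (by linarith)] at h1
      have h2 : ‖z‖ ≤ 2 * R := by nlinarith [norm_nonneg z]
      rw [hbound, Set.indicator_of_mem (by simpa using h2), norm_mul,
        Real.norm_of_nonneg (r := (‖z‖ ^ α)⁻¹) (by positivity)]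
      gcongr
      exact (ContinuousLinearMap.le_opNorm _ _).trans
        (mul_le_mul (hM _) h2 (norm_nonneg _) hM0)
  · rw [hbound, integrable_indicator_iff Metric.isClosed_closedBall.measurableSet]
    exact (hk.integrableOn_isCompact (isCompact_closedBall _ _)).const_mul _
  · refine Filter.Eventually.of_forall fun z s hs => ?_
    have h1 : HasDerivAt (fun s : ℝ => s • z) z s := by
      simpa using (hasDerivAt_id s).smul_const z
    exact (((hf.differentiable (by norm_num)) (s • z)).hasFDerivAt.comp_hasDerivAt s h1).mul_const _

lemma fub (N : ℕ) (hN : 1 ≤ N) (α : ℝ) (hα : α < N) (f h : Euc N → ℝ)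
    (hf : Continuous f) (hfc : HasCompactSupport f) (hh : Continuous h)
    (hhc : HasCompactSupport h) :
    ∫ x, f x * ∫ y, h y * (‖x - y‖ ^ α)⁻¹ = ∫ y, h y * ∫ x, f x * (‖y - x‖ ^ α)⁻¹ := by
  have hk := kern_locInt N hN α hα
  obtain ⟨R, hR0, hR⟩ := hfc.isCompact.isBounded.exists_pos_norm_lt
  obtain ⟨S, hS0, hS⟩ := hhc.isCompact.isBounded.exists_pos_norm_lt
  obtain ⟨M, hM⟩ := hf.bounded_above_of_compact_support hfc
  set k' : Euc N → ℝ := (Metric.closedBall (0 : Euc N) (R + S)).indicator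
    (fun z => (‖z‖ ^ α)⁻¹) with hk'
  have hk'i : Integrable k' := by
    rw [hk', integrable_indicator_iff Metric.isClosed_closedBall.measurableSet]
    exact hk.integrableOn_isCompact (isCompact_closedBall _ _)
  have hi := ((hh.integrable_of_hasCompactSupport hhc : Integrable h volume).convolution_integrand
    (ContinuousLinearMap.mul ℝ ℝ) hk'i)
  have hi2 := hi.bdd_mul (f := fun p : Euc N × Euc N => f p.1) (c := M)
    (hf.comp continuous_fst).aestronglyMeasurable (Filter.Eventually.of_forall fun p => hM p.1)
  have hint : Integrable (Function.uncurry fun x y : Euc N => f x * (h y * (‖x - y‖ ^ α)⁻¹))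
      (volume.prod volume) := by
    refine hi2.congr (Filter.Eventually.of_forall fun p => ?_)
    obtain ⟨x, y⟩ := p
    simp only [Function.uncurry, ContinuousLinearMap.mul_apply']
    by_cases hx : f x = 0
    · simp [hx]
    by_cases hy : h y = 0
    · simp [hy]
    have h1 := hR _ (subset_tsupport _ hx)
    have h2 := hS _ (subset_tsupport _ hy)
    rw [hk', Set.indicator_of_mem]
    simpa using (norm_sub_le x y).trans (by linarith)
  simp_rw [← integral_const_mul]
  rw [integral_integral_swap hint]
  congr 1; ext y; congr 1; ext x
  rw [norm_sub_rev]; ring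

lemma main_aux (N : ℕ) (hN : 3 ≤ N) (ρ : Euc N → ℝ) (hρ : ContDiff ℝ 1 ρ)
    (hsupp : HasCompactSupport ρ) (U : Euc N → ℝ)
    (hU : ∀ x, U x = ∫ y, ρ y * (‖x - y‖ ^ ((N : ℝ) - 2))⁻¹) :
    ContDiff ℝ 1 U ∧
      ∫ x, ρ x * fderiv ℝ U x x = (2 - (N : ℝ)) / 2 * ∫ x, ρ x * U x := by
  have hN1 : 1 ≤ N := by omega
  have hN0 : (0:ℝ) < N := by positivity
  have hα : (N : ℝ) - 2 < N := by linarith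
  have hk := kern_locInt N hN1 _ hα
  set k : Euc N → ℝ := fun z => (‖z‖ ^ ((N : ℝ) - 2))⁻¹ with hkdef
  have hUc : U = convolution k ρ (ContinuousLinearMap.mul ℝ ℝ) volume := by
    ext x
    rw [hU, convolution_def, ← integral_sub_left_eq_self _ volume x]
    congr 1; ext t; simp [hkdef, mul_comm]
  have hU1 : ContDiff ℝ 1 U := by
    rw [hUc]; exact_mod_cast hsupp.contDiff_convolution_right (n := 1) _ hk (by exact_mod_cast hρ)
  refine ⟨hU1, ?_⟩
  have hρ' : Continuous (fderiv ℝ ρ) := hρ.continuous_fderiv (by norm_num)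
  have hρd := hρ.differentiable (by norm_num)
  have hUd := hU1.differentiable (by norm_num)
  have hU' : Continuous (fderiv ℝ U) := hU1.continuous_fderiv (by norm_num)
  set h : Euc N → ℝ := fun y => fderiv ℝ ρ y y with hh
  have hhcont : Continuous h := hρ'.clm_apply continuous_id
  have hhc : HasCompactSupport h := by
    refine (hsupp.fderiv ℝ).mono fun x hx => ?_
    contrapose! hx
    simp only [Function.mem_support, not_not] at hx ⊢
    simp [hh, hx]
  -- pointwise identity
  have hpt : ∀ x, fderiv ℝ U x x = 2 * U x + ∫ y, h y * (‖x - y‖ ^ ((N : ℝ) - 2))⁻¹ := by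
    intro x
    have hrefl : ∀ {F : Type} [NormedAddCommGroup F] (u : Euc N → F), HasCompactSupport u →
        HasCompactSupport (fun z => u (x - z)) := fun u hu =>
      hu.comp_homeomorph (Homeomorph.subLeft x)
    have hd := hsupp.hasFDerivAt_convolution_right (ContinuousLinearMap.mul ℝ ℝ) hk hρ x
    rw [← hUc] at hd
    have hgi : Integrable (fun t => k t • fderiv ℝ ρ (x - t)) volume :=
      hk.integrable_smul_right_of_hasCompactSupport (hρ'.comp (continuous_const.sub continuous_id))
        (hrefl _ (hsupp.fderiv ℝ))
    have e1 : fderiv ℝ U x x = ∫ t, k t * fderiv ℝ ρ (x - t) x := by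
      rw [hd.fderiv, convolution_def]
      have : ∀ t, (ContinuousLinearMap.precompR (Euc N) (ContinuousLinearMap.mul ℝ ℝ)) (k t)
          (fderiv ℝ ρ (x - t)) = k t • fderiv ℝ ρ (x - t) := by
        intro t; ext v; simp
      simp_rw [this]
      rw [ContinuousLinearMap.integral_apply hgi]
      simp
    have e2 := euler_id N hN1 _ hα (fun z => ρ (x - z)) (hρ.comp (contDiff_const.sub contDiff_id))
      (hrefl _ hsupp)
    have e3 : ∀ z, fderiv ℝ (fun z => ρ (x - z)) z z = - fderiv ℝ ρ (x - z) z := by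
      intro z
      have := (hρd (x - z)).hasFDerivAt.comp z ((hasFDerivAt_id z).const_sub x)
      have h2 := this.fderiv
      simp only [Function.comp_def, id] at h2
      rw [h2]; simp
    simp_rw [e3] at e2
    have e4 : U x = ∫ z, ρ (x - z) * (‖z‖ ^ ((N : ℝ) - 2))⁻¹ := by
      rw [hU, ← integral_sub_left_eq_self _ volume x]
      simp
    have e5 : ∫ y, h y * (‖x - y‖ ^ ((N : ℝ) - 2))⁻¹ = ∫ t, k t * h (x - t) := by
      rw [← integral_sub_left_eq_self _ volume x]
      congr 1; ext t; simp [hkdef, mul_comm]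
    rw [← e4] at e2
    have i1 : Integrable (fun t => k t * h (x - t)) volume :=
      hk.integrable_smul_right_of_hasCompactSupport
        (hhcont.comp (continuous_const.sub continuous_id)) (hrefl _ hhc)
    have c1 : Continuous (fun t => fderiv ℝ ρ (x - t) t) :=
      (hρ'.comp (continuous_const.sub continuous_id)).clm_apply continuous_id
    have i2 : Integrable (fun t => k t * fderiv ℝ ρ (x - t) t) volume := by
      refine hk.integrable_smul_right_of_hasCompactSupport c1 ?_
      refine (hrefl _ (hsupp.fderiv ℝ)).mono fun z hz => ?_
      contrapose! hz
      simp only [Function.mem_support, not_not] at hz ⊢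
      simp [hz]
    have e6 : ∫ t, k t * fderiv ℝ ρ (x - t) x
        = (∫ t, k t * fderiv ℝ ρ (x - t) t) + ∫ t, k t * h (x - t) := by
      rw [← integral_add i2 i1]
      congr 1; ext t
      simp only [hh, map_sub]; ring
    have e7 : ∫ t, k t * fderiv ℝ ρ (x - t) t = 2 * U x := by
      have : ∫ t, -(fderiv ℝ ρ (x - t)) t * (‖t‖ ^ ((N : ℝ) - 2))⁻¹
          = - ∫ t, k t * fderiv ℝ ρ (x - t) t := by
        rw [← integral_neg]; congr 1; ext t; simp [hkdef, mul_comm]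
      rw [this] at e2
      linarith
    rw [e1, e6, e7, e5]
  -- integration by parts for ρ U
  have hA : Continuous (fun x => ρ x * fderiv ℝ U x x) :=
    hρ.continuous.mul (hU'.clm_apply continuous_id)
  have iA : Integrable (fun x => ρ x * fderiv ℝ U x x) volume :=
    hA.integrable_of_hasCompactSupport hsupp.mul_right
  have iB : Integrable (fun x => h x * U x) volume :=
    (hhcont.mul hU1.continuous).integrable_of_hasCompactSupport hhc.mul_right
  have iW : Integrable (fun x => ρ x * U x) volume :=
    (hρ.continuous.mul hU1.continuous).integrable_of_hasCompactSupport hsupp.mul_right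
  have p1 := euler_id N hN1 0 hN0 (fun x => ρ x * U x) (hρ.mul hU1) hsupp.mul_right
  have p2 : ∀ x, fderiv ℝ (fun x => ρ x * U x) x x = ρ x * fderiv ℝ U x x + h x * U x := by
    intro x
    rw [fderiv_fun_mul (hρd x) (hUd x)]
    simp [hh, mul_comm]
  simp only [Real.rpow_zero, inv_one, mul_one, p2] at p1
  rw [integral_add iA iB] at p1
  have p3 : ∫ x, ρ x * fderiv ℝ U x x = 2 * (∫ x, ρ x * U x) + ∫ x, h x * U x := by
    have q1 : ∫ x, h x * U x = ∫ x, ρ x * ∫ y, h y * (‖x - y‖ ^ ((N : ℝ) - 2))⁻¹ := by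
      rw [fub N hN1 _ hα ρ h hρ.continuous hsupp hhcont hhc]
      simp_rw [hU]
    have q2 : ∀ x, ρ x * ∫ y, h y * (‖x - y‖ ^ ((N : ℝ) - 2))⁻¹
        = ρ x * fderiv ℝ U x x - 2 * (ρ x * U x) := by
      intro x; rw [hpt]; ring
    rw [q1]
    simp_rw [q2]
    rw [integral_sub iA (iW.const_mul 2), integral_const_mul]
    ring
  linarith

/-- For an `N ≥ 3` dimensional hydrostatic equilibrium
`∇P = -ρ∇Φ` with `P = Kρ^γ` and `Φ(x) = -g∫ ρ(y)/|x-y|^(N-2) dy`, the virial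
identity `N∫P = (g(N-2)/2)∫∫ ρ(x)ρ(y)/|x-y|^(N-2) = -((N-2)/2)∫ρΦ` holds. -/
theorem virial_identity (N : ℕ) (hN : 3 ≤ N) (K γ g : ℝ)
    (hK : 0 < K) (hγ : 1 < γ) (hg : 0 < g)
    (ρ : Euc N → ℝ) (hρ : ContDiff ℝ 1 ρ) (hsupp : HasCompactSupport ρ)
    (hnn : ∀ x, 0 ≤ ρ x)
    (Φ : Euc N → ℝ)
    (hΦ : ∀ x, Φ x = -(g * ∫ y, ρ y / ‖x - y‖ ^ ((N : ℝ) - 2)))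
    (hhyd : ∀ x, gradient (fun z => K * ρ z ^ γ) x = -(ρ x) • gradient Φ x) :
    (N : ℝ) * ∫ x, K * ρ x ^ γ
        = (g * ((N : ℝ) - 2) / 2) * ∫ x, ρ x * ∫ y, ρ y / ‖x - y‖ ^ ((N : ℝ) - 2)
      ∧ (N : ℝ) * ∫ x, K * ρ x ^ γ
        = -(((N : ℝ) - 2) / 2) * ∫ x, ρ x * Φ x := by
  have hN1 : 1 ≤ N := by omega
  have hN0 : (0:ℝ) < N := by positivity
  have hγ0 : γ ≠ 0 := by linarith
  set U : Euc N → ℝ := fun x => ∫ y, ρ y / ‖x - y‖ ^ ((N : ℝ) - 2) with hUdef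
  obtain ⟨hU1, hV⟩ := main_aux N hN ρ hρ hsupp U (fun x => by simp [hUdef, div_eq_mul_inv])
  have hΦU : Φ = fun x => (-g) * U x := by
    ext x; rw [hΦ]; simp [hUdef]
  have hP1 : ContDiff ℝ 1 (fun z => K * ρ z ^ γ) :=
    contDiff_const.mul (by
      exact_mod_cast ContDiff.rpow_const_of_le (m := 1) (by exact_mod_cast hρ)
        (by exact_mod_cast hγ.le))
  have hPc : HasCompactSupport (fun z => K * ρ z ^ γ) := by
    refine hsupp.mono fun x hx => ?_
    contrapose! hx
    simp only [Function.mem_support, not_not] at hx ⊢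
    simp [hx, Real.zero_rpow hγ0]
  have p1 := euler_id N hN1 0 hN0 _ hP1 hPc
  simp only [Real.rpow_zero, inv_one, mul_one] at p1
  have hUd := hU1.differentiable (by norm_num)
  have p2 : ∀ x, fderiv ℝ (fun z => K * ρ z ^ γ) x x = g * (ρ x * fderiv ℝ U x x) := by
    intro x
    have e := congrArg (fun v => inner ℝ v x) (hhyd x)
    simp only [inner_smul_left, inner_gradient_left] at e
    rw [e, hΦU, fderiv_const_mul (hUd x)]
    simp
    ring
  simp_rw [p2] at p1
  rw [integral_const_mul, hV] at p1
  have r1 : (N : ℝ) * ∫ x, K * ρ x ^ γ = (g * ((N : ℝ) - 2) / 2) * ∫ x, ρ x * U x := by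
    linarith
  refine ⟨r1, ?_⟩
  have r2 : ∫ x, ρ x * Φ x = (-g) * ∫ x, ρ x * U x := by
    rw [← integral_const_mul, hΦU]; congr 1; ext x; ring
  rw [r1, r2]; ring
end
end

section
/- Let N ≥ 3 and let ρ : R^N → [0,∞) be a C¹ function with compact support, P = Kρ^γ with K > 0 and γ > 1, and Φ(x) = −g∫ ρ(y)/|x−y|^{N−2} dy with g > 0, satisfying ∇P(x) = −ρ(x)∇Φ(x) for all x. Then the total energy E = ∫ (P/(γ−1) + ½ρΦ) dx of this stationary solution equals ((2N−2−Nγ)/((γ−1)(N−2))) ∫ P(x) dx. -/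
open MeasureTheory Real Filter
open scoped RealInnerProductSpace Topology

noncomputable section

lemma aux_deriv {N : ℕ} (w f : Euc N → ℝ) (hw : LocallyIntegrable w) (hf : ContDiff ℝ 1 f)
    (hc : HasCompactSupport f) :
    HasDerivAt (fun l : ℝ => ∫ y, w y * f (l • y)) (∫ y, w y * fderiv ℝ f y y) 1 := by
  have hc' := hc.fderiv (𝕜 := ℝ)
  have hcont : Continuous (fderiv ℝ f) := hf.continuous_fderiv (by norm_num)
  obtain ⟨C, hC⟩ := hc'.exists_bound_of_continuous hcont
  obtain ⟨R, hR⟩ := hc'.isCompact.isBounded.subset_closedBall (0 : Euc N)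
  have hC0 : 0 ≤ C := (norm_nonneg _).trans (hC 0)
  have hwm := hw.aestronglyMeasurable
  have key := (hasDerivAt_integral_of_dominated_loc_of_deriv_le (μ := (volume : Measure (Euc N)))
    (F := fun l y => w y * f (l • y)) (F' := fun l y => w y * fderiv ℝ f (l • y) y)
    (x₀ := (1:ℝ)) (s := Set.Ioo (1/2) 2)
    (bound := (Metric.closedBall (0:Euc N) (2*R)).indicator (fun y => ‖w y‖ * (C * (2 * R))))
    (Ioo_mem_nhds (by norm_num) (by norm_num)) ?_ ?_ ?_ ?_ ?_ ?_).2
  · simpa using key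
  · refine Eventually.of_forall fun l => hwm.mul ?_
    exact (hf.continuous.comp (continuous_const_smul l)).aestronglyMeasurable
  · simp only [one_smul]
    simpa [mul_comm] using hw.integrable_smul_left_of_hasCompactSupport hf.continuous hc
  · refine hwm.mul ?_
    exact ((hcont.comp (continuous_const_smul 1)).clm_apply continuous_id).aestronglyMeasurable
  · refine Eventually.of_forall fun y l hl => ?_
    by_cases hy : fderiv ℝ f (l • y) = 0
    · simp only [hy]
      simp only [zero_apply, mul_zero, norm_zero]
      refine Set.indicator_nonneg (fun z hz => ?_) y
      have : 0 ≤ 2 * R := (norm_nonneg z).trans (by simpa using hz)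
      positivity
    · have h1 : l • y ∈ Metric.closedBall (0:Euc N) R := hR (subset_tsupport _ hy)
      have h2 : ‖y‖ ≤ 2 * R := by
        simp only [Metric.mem_closedBall, dist_zero_right, norm_smul, Real.norm_eq_abs] at h1
        rw [abs_of_pos (by linarith [hl.1])] at h1
        nlinarith [hl.1, norm_nonneg y]
      rw [Set.indicator_of_mem (by simpa using h2), norm_mul]
      gcongr
      exact (ContinuousLinearMap.le_opNorm _ _).trans (by gcongr; exact hC _)
  · rw [integrable_indicator_iff measurableSet_closedBall]
    exact (hw.integrableOn_isCompact (isCompact_closedBall _ _)).norm.mul_const _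
  · refine Eventually.of_forall fun y l hl => ?_
    refine HasDerivAt.const_mul _ ?_
    have h1 : HasFDerivAt f (fderiv ℝ f (l • y)) (l • y) :=
      (hf.differentiable (by norm_num) _).hasFDerivAt
    have h2 : HasDerivAt (fun l : ℝ => l • y) y l := by
      simpa using (hasDerivAt_id l).smul_const y
    exact h1.comp_hasDerivAt l h2

lemma aux_virial_s4 {N : ℕ} (f : Euc N → ℝ) (hf : ContDiff ℝ 1 f) (hc : HasCompactSupport f) :
    ∫ y, fderiv ℝ f y y = -N * ∫ y, f y := by
  have h := aux_deriv (fun _ => 1) f (locallyIntegrable_const _) hf hc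
  simp only [one_mul] at h
  have h2 : HasDerivAt (fun l : ℝ => (l ^ N)⁻¹ * ∫ y, f y) (-N * ∫ y, f y) 1 := by
    refine HasDerivAt.mul_const ?_ _
    have := (hasDerivAt_pow N (1:ℝ)).fun_inv (by simp)
    simpa using this
  refine h.unique (h2.congr_of_eventuallyEq ?_)
  filter_upwards [Ioi_mem_nhds (show (0:ℝ) < 1 by norm_num)] with l hl
  have hl : 0 < l := hl
  rw [Measure.integral_comp_smul]
  simp only [finrank_euclideanSpace, Fintype.card_fin, smul_eq_mul]
  rw [abs_of_pos (by positivity)]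

def nker (N : ℕ) (z : Euc N) : ℝ := (‖z‖ ^ ((N : ℝ) - 2))⁻¹

lemma ker_meas (N : ℕ) : Measurable (nker N) := by unfold nker; fun_prop

lemma ker_symm (N : ℕ) (x y : Euc N) : nker N (x - y) = nker N (y - x) := by
  unfold nker; rw [norm_sub_rev]

lemma ker_locInt (N : ℕ) (hN : 3 ≤ N) : LocallyIntegrable (nker N) := by
  refine locallyIntegrable_of_norm_le_rpow (C := 1) (α := (N:ℝ) - 2) ?_ ?_ ?_ ?_
  · simp; omega
  · simp
  · refine Eventually.of_forall fun x => ?_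
    unfold nker
    rw [Real.rpow_neg (norm_nonneg _), one_mul, Real.norm_of_nonneg (by positivity)]
  · exact (ker_meas N).aestronglyMeasurable

lemma ker_smul (N : ℕ) (l : ℝ) (hl : 0 < l) (z : Euc N) :
    l ^ N * nker N (l • z) = l ^ 2 * nker N z := by
  unfold nker
  rw [norm_smul, Real.norm_eq_abs, abs_of_pos hl, Real.mul_rpow hl.le (norm_nonneg _),
    Real.rpow_sub hl, Real.rpow_natCast, Real.rpow_two]
  field_simp

lemma ker_contDiff (N : ℕ) (hN : 3 ≤ N) (f : Euc N → ℝ) (hf : ContDiff ℝ 1 f)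
    (hc : HasCompactSupport f) : ContDiff ℝ 1 (fun x => ∫ y, f y * nker N (x - y)) :=
  hc.contDiff_convolution_left (ContinuousLinearMap.mul ℝ ℝ) hf (ker_locInt N hN)

lemma ker_scale (N : ℕ) (hN : 3 ≤ N) (f : Euc N → ℝ) (hf : ContDiff ℝ 1 f)
    (hc : HasCompactSupport f) (x : Euc N) :
    fderiv ℝ (fun x => ∫ y, f y * nker N (x - y)) x x
      = 2 * (∫ y, f y * nker N (x - y)) + ∫ y, fderiv ℝ f y y * nker N (x - y) := by
  set U := (fun x => ∫ y, f y * nker N (x - y)) with hU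
  have hw : LocallyIntegrable (fun y => nker N (x - y)) := by
    have := (locallyIntegrable_map_homeomorph (μ := (volume : Measure (Euc N)))
      (Homeomorph.subLeft x) (f := nker N)).1 (by
        have : Measure.map (Homeomorph.subLeft x) (volume : Measure (Euc N)) = volume :=
          (Measure.measurePreserving_sub_left volume x).map_eq
        rw [this]; exact ker_locInt N hN)
    exact this
  have h1 : HasDerivAt (fun l : ℝ => U (l • x)) (fderiv ℝ U x x) 1 := by
    have h1 : HasFDerivAt U (fderiv ℝ U ((1:ℝ) • x)) ((1:ℝ) • x) :=
      ((ker_contDiff N hN f hf hc).differentiable (by norm_num) _).hasFDerivAt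
    have h2 : HasDerivAt (fun l : ℝ => l • x) x 1 := by
      simpa using (hasDerivAt_id (1:ℝ)).smul_const x
    have h3 := h1.comp_hasDerivAt 1 h2
    rw [one_smul] at h3
    exact h3
  have h2 := ((hasDerivAt_pow 2 (1:ℝ)).mul (aux_deriv _ f hw hf hc))
  have h3 : (fun l : ℝ => U (l • x)) =ᶠ[𝓝 1]
      (fun l : ℝ => l ^ 2) * fun l : ℝ => ∫ y, nker N (x - y) * f (l • y) := by
    filter_upwards [Ioi_mem_nhds (show (0:ℝ) < 1 by norm_num)] with l hl
    have hl : 0 < l := hl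
    have h4 := Measure.integral_comp_smul (volume : Measure (Euc N))
      (fun y => f y * nker N (l • x - y)) l
    simp only [finrank_euclideanSpace, Fintype.card_fin, smul_eq_mul] at h4
    rw [abs_of_pos (by positivity)] at h4
    have h5 : U (l • x) = l ^ N * ∫ y, f (l • y) * nker N (l • x - l • y) := by
      rw [h4, hU]; field_simp
    rw [h5, Pi.mul_apply, ← integral_const_mul, ← integral_const_mul]
    congr 1; ext y
    rw [← smul_sub, mul_left_comm, ker_smul N l hl]; ring
  have h6 := h1.unique (h2.congr_of_eventuallyEq h3)
  rw [h6]
  simp [hU, mul_comm]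

lemma ker_fubini (N : ℕ) (hN : 3 ≤ N) (f h : Euc N → ℝ) (hf : Continuous f)
    (hc : HasCompactSupport f) (hh : Continuous h) (hhc : HasCompactSupport h) :
    ∫ x, f x * ∫ y, h y * nker N (x - y) = ∫ x, h x * ∫ y, f y * nker N (x - y) := by
  obtain ⟨C, hC⟩ := hc.exists_bound_of_continuous hf
  obtain ⟨R, hR⟩ := hc.isCompact.isBounded.subset_closedBall (0 : Euc N)
  obtain ⟨R', hR'⟩ := hhc.isCompact.isBounded.subset_closedBall (0 : Euc N)
  have hk : Integrable ((Metric.closedBall (0:Euc N) (R+R')).indicator (nker N)) := by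
    rw [integrable_indicator_iff measurableSet_closedBall]
    exact (ker_locInt N hN).integrableOn_isCompact (isCompact_closedBall _ _)
  have hI := Integrable.convolution_integrand (ContinuousLinearMap.mul ℝ ℝ)
    (hh.integrable_of_hasCompactSupport hhc (μ := volume)) hk
  have hI2 := hI.bdd_mul (f := fun p => f p.1) (c := C)
    (hf.comp continuous_fst).aestronglyMeasurable (Eventually.of_forall fun p => hC _)
  have hI3 : Integrable (Function.uncurry fun x y => f x * (h y * nker N (x - y)))
      ((volume : Measure (Euc N)).prod volume) := by
    refine hI2.congr (Eventually.of_forall fun p => ?_)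
    rcases p with ⟨x, y⟩
    simp only [Function.uncurry, ContinuousLinearMap.mul_apply']
    by_cases hx : f x = 0
    · simp [hx]
    by_cases hy : h y = 0
    · simp [hy]
    have h1 := hR (subset_tsupport _ hx)
    have h2 := hR' (subset_tsupport _ hy)
    rw [Set.indicator_of_mem]
    simp only [Metric.mem_closedBall, dist_zero_right] at *
    exact (norm_sub_le _ _).trans (by linarith)
  have := integral_integral_swap hI3
  simp only [integral_const_mul] at this
  rw [this]
  congr 1; ext y
  rw [← integral_const_mul]
  congr 1; ext x
  rw [ker_symm]; ring

/-- For an `N ≥ 3` dimensional hydrostatic equilibrium, the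
stationary total energy `E = ∫ (P/(γ-1) + ½ρΦ) dx` equals
`((2N-2-Nγ)/((γ-1)(N-2))) ∫ P dx`. -/
theorem stationary_energy_highdim (N : ℕ) (hN : 3 ≤ N) (K γ g : ℝ)
    (hK : 0 < K) (hγ : 1 < γ) (hg : 0 < g)
    (ρ : Euc N → ℝ) (hρ : ContDiff ℝ 1 ρ) (hsupp : HasCompactSupport ρ)
    (hnn : ∀ x, 0 ≤ ρ x)
    (Φ : Euc N → ℝ)
    (hΦ : ∀ x, Φ x = -(g * ∫ y, ρ y / ‖x - y‖ ^ ((N : ℝ) - 2)))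
    (hhyd : ∀ x, gradient (fun z => K * ρ z ^ γ) x = -(ρ x) • gradient Φ x) :
    ∫ x, (K * ρ x ^ γ / (γ - 1) + (1 / 2) * ρ x * Φ x)
      = ((2 * (N : ℝ) - 2 - N * γ) / ((γ - 1) * ((N : ℝ) - 2)))
          * ∫ x, K * ρ x ^ γ := by
  have hN3 : (3:ℝ) ≤ N := by exact_mod_cast hN
  have hUC := ker_contDiff N hN ρ hρ hsupp
  have hsc := ker_scale N hN ρ hρ hsupp
  set U := (fun x => ∫ y, ρ y * nker N (x - y)) with hU
  have hΦU : Φ = fun x => -g * U x := by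
    ext x; rw [hΦ, hU]; simp [nker, div_eq_mul_inv]
  have hUd : Differentiable ℝ U := hUC.differentiable (by norm_num)
  have hρd : Differentiable ℝ ρ := hρ.differentiable (by norm_num)
  -- pressure
  have hPC : ContDiff ℝ 1 (fun z => K * ρ z ^ γ) := by
    have := ContDiff.rpow_const_of_le (m := 1) (p := γ) (f := ρ) (by exact_mod_cast hρ)
      (by simpa using hγ.le)
    exact contDiff_const.mul (by exact_mod_cast this)
  have hPc : HasCompactSupport (fun z => K * ρ z ^ γ) := by
    refine hsupp.comp_left (g := fun t => K * t ^ γ) ?_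
    simp [Real.zero_rpow (by linarith : γ ≠ 0)]
  have hvP := aux_virial_s4 _ hPC hPc
  have hfd : ∀ x, fderiv ℝ (fun z => K * ρ z ^ γ) x x = g * (ρ x * fderiv ℝ U x x) := by
    intro x
    rw [← inner_gradient_left, hhyd, hΦU, inner_smul_left, inner_gradient_left,
      fderiv_const_mul (hUd x)]
    simp
    ring
  simp only [hfd] at hvP
  rw [integral_const_mul] at hvP
  -- integration by parts for ρ U
  have hvU := aux_virial_s4 (fun x => ρ x * U x) (hρ.mul hUC) hsupp.mul_right
  have hfc : Continuous (fun x => fderiv ℝ ρ x x) :=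
    (hρ.continuous_fderiv (by norm_num)).clm_apply continuous_id
  have hUc : Continuous (fun x => fderiv ℝ U x x) :=
    (hUC.continuous_fderiv (by norm_num)).clm_apply continuous_id
  have hfcs : HasCompactSupport (fun x => fderiv ℝ ρ x x) := by
    refine (hsupp.fderiv (𝕜 := ℝ)).mono fun x hx => ?_
    simp only [Function.mem_support] at *
    intro h; apply hx; rw [h]; rfl
  have hfd2 : ∀ x, fderiv ℝ (fun x => ρ x * U x) x x
      = ρ x * fderiv ℝ U x x + fderiv ℝ ρ x x * U x := by
    intro x
    rw [fderiv_fun_mul (hρd x) (hUd x)]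
    simp; ring
  have i1 : Integrable (fun x => ρ x * fderiv ℝ U x x) :=
    (hρ.continuous.mul hUc).integrable_of_hasCompactSupport hsupp.mul_right
  have i2 : Integrable (fun x => fderiv ℝ ρ x x * U x) :=
    (hfc.mul hUC.continuous).integrable_of_hasCompactSupport hfcs.mul_right
  have i3 : Integrable (fun x => ρ x * U x) :=
    (hρ.continuous.mul hUC.continuous).integrable_of_hasCompactSupport hsupp.mul_right
  have i4 : Integrable (fun x => K * ρ x ^ γ) :=
    hPC.continuous.integrable_of_hasCompactSupport hPc
  simp only [hfd2] at hvU
  rw [integral_add i1 i2] at hvU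
  have hfub := ker_fubini N hN _ _ hρ.continuous hsupp hfc hfcs
  have hs : ∫ x, ρ x * fderiv ℝ U x x
      = 2 * (∫ x, ρ x * U x) + ∫ x, fderiv ℝ ρ x x * U x := by
    have e : ∀ x, ρ x * ∫ y, fderiv ℝ ρ y y * nker N (x - y)
        = ρ x * fderiv ℝ U x x - 2 * (ρ x * U x) := by
      intro x; rw [hsc x]; ring
    simp only [e] at hfub
    rw [integral_sub i1 (i3.const_mul 2), integral_const_mul] at hfub
    linarith
  have hE : ∫ x, (K * ρ x ^ γ / (γ - 1) + (1 / 2) * ρ x * Φ x)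
      = (∫ x, K * ρ x ^ γ) / (γ - 1) - g / 2 * ∫ x, ρ x * U x := by
    rw [← integral_div, ← integral_const_mul, ← integral_sub (i4.div_const _) (i3.const_mul _)]
    congr 1; ext x; rw [hΦU]; ring
  rw [hE]
  generalize (∫ x, K * ρ x ^ γ) = p at *
  generalize (∫ x, ρ x * U x) = q at *
  generalize (∫ x, ρ x * fderiv ℝ U x x) = a at *
  generalize (∫ x, fderiv ℝ ρ x x * U x) = b at *
  have ha : a = -((N - 2) / 2) * q := by linarith
  have hγ' : γ - 1 ≠ 0 := by linarith
  have hN' : (N:ℝ) - 2 ≠ 0 := by linarith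
  have hq : g / 2 * q = N / (N - 2) * p := by
    rw [ha] at hvP
    field_simp
    linarith
  rw [hq]
  field_simp
  ring
end
end
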